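/- arXiv:2507.06716 — 2 statements merged into one kernel-verified Lean document; each statement's English description precedes it below -/
import Mathlib

section
/- Let σ ∈ (0,1) and σ < α ≤ (3+2σ)/4. For each integer k ≥ 2 define φ_k : ℕ → ℝ by φ_k(n) = 1 for n ≤ k, φ_k(n) = 2 − log n / log k for k < n ≤ k², and φ_k(n) = 0 for n > k², and set ψ_k(n) := φ_k(n)·I_α(n). Then each ψ_k is nonnegative and finitely supported, ψ_k(1) = I_α(1), and Q^σ(ψ_k) − Σ_{n≥1} W_{α,σ}(n)·ψ_k(n)² → 0 as k → ∞ (i.e., (ψ_k) is a null-sequence for (−Δ_ℕ)^σ − W_{α,σ}). -/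
open Real Filter

/-- Generalized binomial coefficient via the Gamma function. -/
noncomputable def rbinom (a b : ℝ) : ℝ :=
  Real.Gamma (a + 1) / (Real.Gamma (b + 1) * Real.Gamma (a - b + 1))

/-- Kernel of the fractional Laplacian `(-Δ_ℕ)^σ` on the discrete half-line. -/
noncomputable def Kker (σ : ℝ) (m n : ℕ) : ℝ :=
  (-1 : ℝ) ^ (m + n) *
    (rbinom (2 * σ) (σ + m - n) - rbinom (2 * σ) (σ + m + n))

/-- Quadratic form of `(-Δ_ℕ)^σ` (used for finitely supported `f` with `f 0 = 0`). -/
noncomputable def Qform (σ : ℝ) (f : ℕ → ℝ) : ℝ :=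
  ∑' m : ℕ, ∑' n : ℕ, Kker σ m n * f m * f n

/-- The Hardy-weight `W_{α,σ}`. -/
noncomputable def Wweight (σ α : ℝ) (n : ℕ) : ℝ :=
  4 ^ σ * (Real.Gamma (3/2 - α + σ) * Real.Gamma α /
            (Real.Gamma (α - σ) * Real.Gamma (3/2 - α))) *
    (Real.Gamma (n + α - σ - 1) * Real.Gamma (n - α + 2) /
      (Real.Gamma (n - α + σ + 2) * Real.Gamma (n + α - 1)))

/-- The Riesz potential `I_α`. -/
noncomputable def Riesz (α : ℝ) (n : ℕ) : ℝ :=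
  (4 * n / (4 ^ α * Real.sqrt 2)) * Real.Gamma (3/2 - α) *
    Real.Gamma (n + α - 1) / (Real.Gamma α * Real.Gamma (n - α + 2))

/-!
Write `V = I_α` and `ω θ = 2 - 2 cos θ`. Up to a constant, `V n` is the moment
`∫ sin (n θ) sin θ ω θ ^ (-α)` over `(0, π)`, while the kernel `K` acts on `n ↦ sin (n θ)` as
multiplication by `ω θ ^ σ`. Hence `K V = I_{α-σ} = W V`, and for a finitely supported `φ` this
gives the ground state representation
`2 (∑ W (φ V)² - Q (φ V)) = ∑ K m n * V m * V n * (φ m - φ n)²`.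
With `d = n - m > 0`, the right-hand side is controlled by `|K m n| ≲ d ^ (-1-2σ)`,
`V n ≲ n ^ (2α-2) ≤ n ^ (σ-1/2)` and, interpolating between `|φ_k m - φ_k n| ≤ 1` and
`|φ_k m - φ_k n| ≤ |log n - log m| / log k ≤ d / (√(m n) log k)`,
`(φ_k m - φ_k n)² ≤ (d / (√(m n) log k)) ^ (1+σ)`.
The remaining factor `d ^ (-σ) n ^ (σ/2-1)` has sum `≲ m ^ (-σ/2)` over `n > m`, so the energy is at
most `C (log k) ^ (-1-σ) ∑_{m ≤ k²} 1/m`, which is of order `(log k) ^ (-σ)`.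
-/

/-! ### Double sums and the ground state representation -/

lemma sum_Ico_add_one_rpow_le {r : ℝ} (hr : r ≤ 0) (hr' : r ≠ -1) {m N : ℕ} (hm : 0 < m)
    (hmN : m ≤ N) :
    ∑ j ∈ Finset.Ico m N, ((j : ℝ) + 1) ^ r ≤
      ((N : ℝ) ^ (r + 1) - (m : ℝ) ^ (r + 1)) / (r + 1) := by
  have hm' : (0 : ℝ) < m := by exact_mod_cast hm
  have hanti : AntitoneOn (fun x : ℝ => x ^ r) (Set.Icc m N) := fun x hx y _ hxy =>
    rpow_le_rpow_of_nonpos (hm'.trans_le hx.1) hxy hr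
  have h0 : (0 : ℝ) ∉ Set.uIcc (m : ℝ) N := by
    rw [Set.uIcc_of_le (by exact_mod_cast hmN)]
    exact fun h => hm'.not_ge h.1
  simpa [integral_rpow (Or.inr ⟨hr', h0⟩)] using hanti.sum_le_integral_Ico hmN

lemma sum_range_add_one_rpow_neg_le {a : ℝ} (ha0 : 0 ≤ a) (ha1 : a < 1) (N : ℕ) :
    ∑ j ∈ Finset.range N, ((j : ℝ) + 1) ^ (-a) ≤ (N : ℝ) ^ (1 - a) / (1 - a) := by
  have ha : 0 < 1 - a := by linarith
  rcases Nat.eq_zero_or_pos N with rfl | hN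
  · simp [zero_rpow ha.ne']
  have htail := sum_Ico_add_one_rpow_le (r := -a) (by linarith) (by linarith) one_pos hN
  have hone : 1 ≤ 1 / (1 - a) := by rw [le_div_iff₀ ha]; linarith
  rw [Finset.range_eq_Ico, Finset.sum_eq_sum_Ico_succ_bot hN]
  rw [Nat.cast_one, one_rpow, neg_add_eq_sub, sub_div] at htail
  simp only [CharP.cast_eq_zero, zero_add, one_rpow]
  linarith

/-- Split at `j = m`: below it the second factor is at most `m ^ (-b)`, above it the product is at
most `(j + 1) ^ (-a - b)`. -/
lemma sum_range_rpow_neg_mul_rpow_neg_le {a b : ℝ} (ha0 : 0 ≤ a) (ha1 : a < 1) (hb : 0 ≤ b)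
    (hab : 1 < a + b) {m : ℕ} (hm : 0 < m) (N : ℕ) :
    ∑ j ∈ Finset.range N, ((j : ℝ) + 1) ^ (-a) * ((m : ℝ) + 1 + j) ^ (-b) ≤
      (1 / (1 - a) + 1 / (a + b - 1)) * (m : ℝ) ^ (1 - a - b) := by
  have hm' : (0 : ℝ) < m := by exact_mod_cast hm
  have hnear : ∑ j ∈ Finset.range m, ((j : ℝ) + 1) ^ (-a) * ((m : ℝ) + 1 + j) ^ (-b) ≤
      1 / (1 - a) * (m : ℝ) ^ (1 - a - b) := by
    calc _ ≤ ∑ j ∈ Finset.range m, ((j : ℝ) + 1) ^ (-a) * (m : ℝ) ^ (-b) := by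
          refine Finset.sum_le_sum fun j _ => mul_le_mul_of_nonneg_left ?_ (by positivity)
          exact rpow_le_rpow_of_nonpos hm' (by linarith [Nat.cast_nonneg (α := ℝ) j])
            (neg_nonpos.2 hb)
      _ ≤ (m : ℝ) ^ (1 - a) / (1 - a) * (m : ℝ) ^ (-b) := by
          rw [← Finset.sum_mul]
          exact mul_le_mul_of_nonneg_right (sum_range_add_one_rpow_neg_le ha0 ha1 m)
            (by positivity)
      _ = _ := by rw [sub_eq_add_neg (1 - a) b, rpow_add hm']; ring
  have hfar : ∑ j ∈ Finset.Ico m (max m N), ((j : ℝ) + 1) ^ (-a) * ((m : ℝ) + 1 + j) ^ (-b) ≤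
      1 / (a + b - 1) * (m : ℝ) ^ (1 - a - b) := by
    calc _ ≤ ∑ j ∈ Finset.Ico m (max m N), ((j : ℝ) + 1) ^ (-a - b) := by
          refine Finset.sum_le_sum fun j _ => ?_
          rw [sub_eq_add_neg, rpow_add (by positivity)]
          refine mul_le_mul_of_nonneg_left ?_ (by positivity)
          exact rpow_le_rpow_of_nonpos (by positivity) (by linarith) (by linarith)
      _ ≤ _ := sum_Ico_add_one_rpow_le (by linarith) (by linarith) hm (le_max_left m N)
      _ = 1 / (a + b - 1) * (m : ℝ) ^ (1 - a - b) -
            (max m N : ℕ) ^ (1 - a - b) / (a + b - 1) := by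
          rw [show -a - b + 1 = -(a + b - 1) by ring, div_neg,
            show -(a + b - 1) = 1 - a - b by ring]
          ring
      _ ≤ _ := sub_le_self _ (div_nonneg (by positivity) (by linarith))
  calc _ ≤ ∑ j ∈ Finset.range (max m N), ((j : ℝ) + 1) ^ (-a) * ((m : ℝ) + 1 + j) ^ (-b) :=
        Finset.sum_le_sum_of_subset_of_nonneg (Finset.range_mono (le_max_right m N))
          fun j _ _ => by positivity
    _ ≤ _ := by
        rw [← Finset.sum_range_add_sum_Ico _ (le_max_left m N), add_mul]
        exact add_le_add hnear hfar

lemma tsum_ite_lt {M : Type*} [AddCommMonoid M] [TopologicalSpace M] (f : ℕ → M) (m : ℕ) :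
    ∑' n, (if m < n then f n else 0) = ∑' j, f (m + 1 + j) := by
  rw [← (add_right_injective (m + 1)).tsum_eq]
  · exact tsum_congr fun j => if_pos (by omega)
  · intro n hn
    have hmn : m < n := by
      by_contra h
      exact hn (if_neg h)
    exact ⟨n - (m + 1), by dsimp only; omega⟩

lemma abs_le_two_mul_sum_of_hasSum_symm {g : ℕ → ℕ → ℝ} {S : ℝ} {s : Finset ℕ} {B : ℕ → ℝ}
    (hsymm : ∀ m n, g m n = g n m) (hdiag : ∀ n, g n n = 0)
    (hzero : ∀ m ∉ s, ∀ n, m < n → g m n = 0)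
    (hB : ∀ m ∈ s, ∀ N, ∑ j ∈ Finset.range N, |g m (m + 1 + j)| ≤ B m)
    (hS : HasSum (fun p : ℕ × ℕ => g p.1 p.2) S) : |S| ≤ 2 * ∑ m ∈ s, B m := by
  set u : ℕ × ℕ → ℝ := fun p => if p.1 < p.2 then |g p.1 p.2| else 0 with hu_def
  have hu_nonneg : ∀ p, 0 ≤ u p := fun p => by simp only [hu_def]; split_ifs <;> simp
  have hu : Summable u := Summable.of_nonneg_of_le hu_nonneg
    (fun p => by simp only [hu_def]; split_ifs <;> simp) hS.summable.abs
  have hu_swap : HasSum (u ∘ Prod.swap) (∑' p, u p) :=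
    (Equiv.prodComm ℕ ℕ).hasSum_iff.2 hu.hasSum
  have habs_le : ∀ p : ℕ × ℕ, ‖g p.1 p.2‖ ≤ u p + u p.swap := by
    intro p
    rcases lt_trichotomy p.1 p.2 with h | h | h
    · simpa [hu_def, h] using hu_nonneg p.swap
    · simpa [h, hdiag] using add_nonneg (hu_nonneg p) (hu_nonneg p.swap)
    · simpa [hu_def, h, hsymm p.1 p.2] using hu_nonneg p
  have hrow_zero : ∀ m ∉ s, ∑' n, u (m, n) = 0 := fun m hm => by
    have : ∀ n, u (m, n) = 0 := fun n => by
      simp only [hu_def]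
      split_ifs with h
      · rw [hzero m hm n h, abs_zero]
      · rfl
    simp only [this, tsum_zero]
  have hrow_le : ∀ m ∈ s, ∑' n, u (m, n) ≤ B m := fun m hm => by
    simp only [hu_def, tsum_ite_lt fun n => |g m n|]
    exact Real.tsum_le_of_sum_range_le (fun j => abs_nonneg _) (hB m hm)
  calc |S| ≤ ∑' p, u p + ∑' p, u p := hS.norm_le_of_bounded (hu.hasSum.add hu_swap) habs_le
    _ = 2 * ∑ m ∈ s, ∑' n, u (m, n) := by rw [← two_mul, hu.tsum_prod, tsum_eq_sum hrow_zero]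
    _ ≤ _ := by gcongr with m hm; exact hrow_le m hm

/-- Expand `(φ i - φ j)²` as `φ i (φ i - φ j) + φ j (φ j - φ i)`: each half is summable row by row,
and the two halves have equal sums by symmetry of `K`. -/
theorem hasSum_groundStateRepresentation {ι : Type*} {K : ι → ι → ℝ}
    (hK : ∀ i j, K i j = K j i) {V R φ : ι → ℝ} {s : Finset ι} (hφ : ∀ i ∉ s, φ i = 0)
    (hR : ∀ i, HasSum (fun j => K i j * V j) (R i)) :
    HasSum (fun p : ι × ι => K p.1 p.2 * V p.1 * V p.2 * (φ p.1 - φ p.2) ^ 2)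
      (2 * (∑' i, R i * V i * φ i ^ 2 - ∑' i, ∑' j, K i j * (φ i * V i) * (φ j * V j))) := by
  set b : ι × ι → ℝ := fun p => K p.1 p.2 * V p.1 * V p.2 * φ p.1 * (φ p.1 - φ p.2) with hb_def
  have hrow : ∀ i, HasSum (fun j => b (i, j))
      (R i * V i * φ i ^ 2 - ∑' j, K i j * (φ i * V i) * (φ j * V j)) := by
    intro i
    have hfin : Summable fun j => K i j * (φ i * V i) * (φ j * V j) :=
      summable_of_ne_finset_zero (s := s) fun j hj => by rw [hφ j hj]; ring
    convert! ((hR i).mul_right (V i * φ i ^ 2)).sub hfin.hasSum using 1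
    · ext j; simp only [hb_def]; ring
    · ring
  have hzero : ∀ i ∉ s, ∀ j, b (i, j) = 0 := fun i hi j => by simp [hb_def, hφ i hi]
  have hb : Summable b := by
    refine Summable.of_norm ((summable_prod_of_nonneg fun p => norm_nonneg _).2
      ⟨fun i => (hrow i).summable.norm, summable_of_ne_finset_zero (s := s) fun i hi => ?_⟩)
    simp [hzero i hi]
  have hb_tsum : ∑' p, b p =
      ∑' i, R i * V i * φ i ^ 2 - ∑' i, ∑' j, K i j * (φ i * V i) * (φ j * V j) := by
    rw [hb.tsum_prod, ← Summable.tsum_sub]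
    · exact tsum_congr fun i => (hrow i).tsum_eq
    · exact summable_of_ne_finset_zero (s := s) fun i hi => by simp [hφ i hi]
    · exact summable_of_ne_finset_zero (s := s) fun i hi => by simp [hφ i hi]
  have hb_swap : HasSum (fun p : ι × ι => b p.swap) (∑' p, b p) :=
    (Equiv.prodComm ι ι).hasSum_iff.2 hb.hasSum
  convert! hb.hasSum.add hb_swap using 1
  · ext p
    simp only [hb_def, Prod.fst_swap, Prod.snd_swap, hK p.2 p.1]
    ring
  · rw [hb_tsum, two_mul]

/-! ### Quotients of Gamma functions and logarithmic increments -/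

lemma Gamma_div_Gamma_mul_rpow_add_one_le {t δ : ℝ} (ht : 0 < t) (hδ : 0 ≤ δ) :
    Gamma (t + 1) / Gamma (t + 1 + δ) * (t + 1 + δ) ^ δ ≤
      Gamma t / Gamma (t + δ) * (t + δ) ^ δ := by
  have hu : 0 < t + δ := by linarith
  have hfactor : t / (t + δ) * ((t + δ + 1) / (t + δ)) ^ δ ≤ 1 := by
    calc t / (t + δ) * ((t + δ + 1) / (t + δ)) ^ δ
        ≤ exp (-(δ / (t + δ))) * exp (1 / (t + δ)) ^ δ := by
          gcongr
          · calc t / (t + δ) = -(δ / (t + δ)) + 1 := by field_simp; ring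
              _ ≤ _ := add_one_le_exp _
          · calc (t + δ + 1) / (t + δ) = 1 / (t + δ) + 1 := by field_simp; ring
              _ ≤ _ := add_one_le_exp _
      _ = 1 := by rw [← exp_mul, ← exp_add, one_div_mul_eq_div, neg_add_cancel, exp_zero]
  rw [add_right_comm, Gamma_add_one ht.ne', Gamma_add_one hu.ne']
  calc _ = Gamma t / Gamma (t + δ) * (t + δ) ^ δ *
          (t / (t + δ) * ((t + δ + 1) / (t + δ)) ^ δ) := by
        rw [div_rpow (by positivity) hu.le]; field_simp
    _ ≤ _ := mul_le_of_le_one_right (by positivity) hfactor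

lemma exists_Gamma_div_Gamma_le_rpow {x y : ℝ} (hx : -1 < x) (hxy : x ≤ y) (hy : 0 ≤ y) :
    ∃ C, 0 ≤ C ∧ ∀ n : ℕ, 1 ≤ n → Gamma (n + x) / Gamma (n + y) ≤ C * (n : ℝ) ^ (x - y) := by
  set C := Gamma (1 + x) / Gamma (1 + y) * (1 + y) ^ (y - x) with hC_def
  have hGx : 0 < Gamma (1 + x) := Gamma_pos_of_pos (by linarith)
  have hle : ∀ n : ℕ, 1 ≤ n →
      Gamma (n + x) / Gamma (n + y) * (n + y) ^ (y - x) ≤ C := by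
    intro n hn
    induction n, hn using Nat.le_induction with
    | base => simp [hC_def]
    | succ n hn ih =>
      have hn' : (1 : ℝ) ≤ n := by exact_mod_cast hn
      have hstep := Gamma_div_Gamma_mul_rpow_add_one_le (t := n + x) (δ := y - x)
        (by linarith) (by linarith)
      rw [show (n : ℝ) + x + 1 + (y - x) = n + 1 + y by ring, show (n : ℝ) + x + 1 = n + 1 + x by
        ring, show (n : ℝ) + x + (y - x) = n + y by ring] at hstep
      push_cast
      exact hstep.trans ih
  refine ⟨C, by positivity, fun n hn => ?_⟩
  have hn' : (1 : ℝ) ≤ n := by exact_mod_cast hn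
  have hratio : 0 ≤ Gamma (n + x) / Gamma (n + y) :=
    div_nonneg (Gamma_pos_of_pos (by linarith)).le (Gamma_pos_of_pos (by linarith)).le
  rw [← neg_sub y x, rpow_neg (by linarith), ← div_eq_mul_inv, le_div_iff₀ (by positivity)]
  exact (mul_le_mul_of_nonneg_left (rpow_le_rpow (by linarith) (by linarith) (by linarith))
    hratio).trans (hle n hn)

lemma log_sub_log_le_div_sqrt {x y : ℝ} (hx : 0 < x) (hxy : x ≤ y) :
    log y - log x ≤ (y - x) / √(x * y) := by
  have hy : 0 < y := hx.trans_le hxy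
  set t := (log y - log x) / 2 with ht_def
  have ht : 0 ≤ t := by have := log_le_log hx hxy; simp only [ht_def]; linarith
  have hexp : ∀ z : ℝ, 0 < z → exp (log z / 2) = √z := fun z hz => by
    rw [← log_sqrt hz.le, exp_log (sqrt_pos.2 hz)]
  have hsinh : 2 * sinh t = (y - x) / √(x * y) := by
    rw [sinh_eq, show -t = log x / 2 - log y / 2 by simp only [ht_def]; ring,
      show t = log y / 2 - log x / 2 by simp only [ht_def]; ring, exp_sub, exp_sub,
      hexp x hx, hexp y hy, sqrt_mul hx.le]
    field_simp
    rw [sq_sqrt hx.le, sq_sqrt hy.le]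
  rw [← hsinh]
  linarith [self_le_sinh_iff.2 ht]

/-! ### Powers of the symbol -/

section Symbol

open MeasureTheory ProbabilityTheory Set intervalIntegral

lemma lintegral_rpow_mul_one_sub_rpow {u v : ℝ} (hu : 0 < u) (hv : 0 < v) :
    ∫⁻ x in Ioo (0 : ℝ) 1, ENNReal.ofReal (x ^ (u - 1) * (1 - x) ^ (v - 1)) =
      ENNReal.ofReal (beta u v) := by
  have hβ := beta_pos hu hv
  have hone := lintegral_betaPDF_eq_one hu hv
  simp_rw [lintegral_betaPDF, mul_assoc, ENNReal.ofReal_mul (one_div_pos.2 hβ).le] at hone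
  rw [lintegral_const_mul _ (by fun_prop), one_div, ENNReal.ofReal_inv_of_pos hβ, mul_comm,
    ← div_eq_mul_inv, ENNReal.div_eq_one_iff (ENNReal.ofReal_pos.2 hβ).ne' ENNReal.ofReal_ne_top]
    at hone
  exact hone

lemma ae_nonneg_rpow_mul_one_sub_rpow (u v : ℝ) :
    ∀ᵐ x ∂volume.restrict (Ioo (0 : ℝ) 1), 0 ≤ x ^ (u - 1) * (1 - x) ^ (v - 1) :=
  ae_restrict_of_forall_mem measurableSet_Ioo fun _ hx =>
    mul_nonneg (rpow_nonneg hx.1.le _) (rpow_nonneg (sub_nonneg.2 hx.2.le) _)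

lemma integrableOn_rpow_mul_one_sub_rpow {u v : ℝ} (hu : 0 < u) (hv : 0 < v) :
    IntegrableOn (fun x : ℝ => x ^ (u - 1) * (1 - x) ^ (v - 1)) (Ioo 0 1) := by
  refine (lintegral_ofReal_ne_top_iff_integrable ?_ (ae_nonneg_rpow_mul_one_sub_rpow u v)).1 ?_
  · exact Measurable.aestronglyMeasurable (by fun_prop)
  · rw [lintegral_rpow_mul_one_sub_rpow hu hv]
    exact ENNReal.ofReal_ne_top

lemma integral_rpow_mul_one_sub_rpow {u v : ℝ} (hu : 0 < u) (hv : 0 < v) :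
    ∫ x in Ioo (0 : ℝ) 1, x ^ (u - 1) * (1 - x) ^ (v - 1) = beta u v := by
  rw [integral_eq_lintegral_of_nonneg_ae (ae_nonneg_rpow_mul_one_sub_rpow u v)
    (integrableOn_rpow_mul_one_sub_rpow hu hv).aestronglyMeasurable,
    lintegral_rpow_mul_one_sub_rpow hu hv, ENNReal.toReal_ofReal (beta_pos hu hv).le]

/-- The Fourier symbol `2 - 2 cos θ` of the discrete Laplacian. -/
noncomputable def laplaceSymbol (θ : ℝ) : ℝ := 2 - 2 * cos θ

@[fun_prop]
lemma continuous_laplaceSymbol : Continuous laplaceSymbol := by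
  unfold laplaceSymbol; fun_prop

lemma laplaceSymbol_zero : laplaceSymbol 0 = 0 := by simp [laplaceSymbol]

lemma laplaceSymbol_pi : laplaceSymbol π = 4 := by norm_num [laplaceSymbol]

lemma laplaceSymbol_nonneg (θ : ℝ) : 0 ≤ laplaceSymbol θ := by
  unfold laplaceSymbol; linarith [cos_le_one θ]

lemma strictMonoOn_laplaceSymbol : StrictMonoOn laplaceSymbol (Icc 0 π) := fun x hx y hy hxy => by
  unfold laplaceSymbol; linarith [strictAntiOn_cos hx hy hxy]

lemma laplaceSymbol_pos {θ : ℝ} (hθ : θ ∈ Ioc 0 π) : 0 < laplaceSymbol θ := by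
  simpa only [laplaceSymbol_zero] using
    strictMonoOn_laplaceSymbol ⟨le_rfl, pi_pos.le⟩ ⟨hθ.1.le, hθ.2⟩ hθ.1

lemma hasDerivAt_laplaceSymbol (θ : ℝ) : HasDerivAt laplaceSymbol (2 * sin θ) θ := by
  unfold laplaceSymbol
  simpa using ((hasDerivAt_cos θ).const_mul 2).const_sub 2

lemma hasDerivAt_laplaceSymbol_rpow (s : ℝ) {θ : ℝ} (hθ : θ ∈ Ioc 0 π) :
    HasDerivAt (fun θ => laplaceSymbol θ ^ s)
      (2 * sin θ * s * laplaceSymbol θ ^ (s - 1)) θ :=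
  (hasDerivAt_laplaceSymbol θ).rpow_const (Or.inl (laplaceSymbol_pos hθ).ne')

lemma sin_sq_eq_laplaceSymbol (θ : ℝ) :
    sin θ ^ 2 = laplaceSymbol θ - laplaceSymbol θ ^ 2 / 4 := by
  rw [sin_sq, laplaceSymbol]; ring

lemma abs_sin_le_laplaceSymbol_rpow (θ : ℝ) : |sin θ| ≤ laplaceSymbol θ ^ (1 / 2 : ℝ) := by
  rw [← sqrt_eq_rpow]
  refine abs_le_sqrt ?_
  rw [sin_sq_eq_laplaceSymbol]
  linarith [sq_nonneg (laplaceSymbol θ)]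

lemma abs_sin_nat_mul_le (n : ℕ) (θ : ℝ) : |sin (n * θ)| ≤ n * |sin θ| := by
  induction n with
  | zero => simp
  | succ n ih =>
    push_cast
    calc |sin ((n + 1) * θ)| = |sin (n * θ) * cos θ + cos (n * θ) * sin θ| := by
          rw [add_one_mul, sin_add]
      _ ≤ |sin (n * θ)| * 1 + 1 * |sin θ| := by
          refine (abs_add_le _ _).trans ?_
          rw [abs_mul, abs_mul]
          gcongr <;> exact abs_cos_le_one _
      _ ≤ (n + 1) * |sin θ| := by linarith

lemma image_laplaceSymbol_div_four : (fun θ => laplaceSymbol θ / 4) '' Ioo 0 π = Ioo 0 1 := by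
  have hcont : ContinuousOn (fun θ => laplaceSymbol θ / 4) (Icc 0 π) := by fun_prop
  have hmono : StrictMonoOn (fun θ => laplaceSymbol θ / 4) (Icc 0 π) := fun x hx y hy hxy =>
    div_lt_div_of_pos_right (strictMonoOn_laplaceSymbol hx hy hxy) four_pos
  simpa [laplaceSymbol_zero, laplaceSymbol_pi] using
    hcont.image_Ioo_of_strictMonoOn pi_pos.le hmono

/-- The pull-back of the Beta integrand under `x = laplaceSymbol θ / 4 = sin² (θ / 2)`. -/
lemma deriv_mul_beta_comp_laplaceSymbol (s : ℝ) {θ : ℝ} (hθ : θ ∈ Ioo 0 π) :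
    sin θ / 2 * ((laplaceSymbol θ / 4) ^ (s + 1 / 2 - 1) *
      (1 - laplaceSymbol θ / 4) ^ (1 / 2 - 1 : ℝ)) = (4 ^ s)⁻¹ * laplaceSymbol θ ^ s := by
  set x := laplaceSymbol θ / 4 with hx_def
  have hx_mem : x ∈ Ioo 0 1 := image_laplaceSymbol_div_four ▸ mem_image_of_mem _ hθ
  have hx : 0 < x := hx_mem.1
  have hy : 0 < 1 - x := sub_pos.2 hx_mem.2
  have hsin : sin θ / 2 = x ^ (1 / 2 : ℝ) * (1 - x) ^ (1 / 2 : ℝ) := by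
    have hsin_pos := sin_pos_of_pos_of_lt_pi hθ.1 hθ.2
    rw [← mul_rpow hx.le hy.le, ← sqrt_eq_rpow,
      show x * (1 - x) = (sin θ / 2) ^ 2 by rw [div_pow, sin_sq_eq_laplaceSymbol]; ring,
      sqrt_sq (by linarith)]
  have hx_pow : x ^ (1 / 2 : ℝ) * x ^ (s + 1 / 2 - 1) = x ^ s := by
    rw [← rpow_add hx]; congr 1; ring
  have hy_pow : (1 - x) ^ (1 / 2 : ℝ) * (1 - x) ^ (1 / 2 - 1 : ℝ) = 1 := by
    rw [← rpow_add hy]; norm_num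
  calc _ = (x ^ (1 / 2 : ℝ) * x ^ (s + 1 / 2 - 1)) *
        ((1 - x) ^ (1 / 2 : ℝ) * (1 - x) ^ (1 / 2 - 1 : ℝ)) := by rw [hsin]; ring
    _ = x ^ s := by rw [hx_pow, hy_pow, mul_one]
    _ = _ := by rw [hx_def, div_rpow (laplaceSymbol_nonneg θ) zero_le_four, inv_mul_eq_div]

lemma hasDerivWithinAt_laplaceSymbol_div_four :
    ∀ θ ∈ Ioo 0 π, HasDerivWithinAt (fun θ => laplaceSymbol θ / 4) (sin θ / 2) (Ioo 0 π) θ := by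
  intro θ _
  convert! ((hasDerivAt_laplaceSymbol θ).div_const 4).hasDerivWithinAt using 1
  ring

lemma monotoneOn_laplaceSymbol_div_four :
    MonotoneOn (fun θ => laplaceSymbol θ / 4) (Ioo 0 π) := fun _ hx _ hy hxy =>
  div_le_div_of_nonneg_right (strictMonoOn_laplaceSymbol.monotoneOn (Ioo_subset_Icc_self hx)
    (Ioo_subset_Icc_self hy) hxy) zero_le_four

lemma intervalIntegrable_laplaceSymbol_rpow {s : ℝ} (hs : -(1 / 2) < s) :
    IntervalIntegrable (fun θ => laplaceSymbol θ ^ s) volume 0 π := by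
  rw [intervalIntegrable_iff_integrableOn_Ioo_of_le pi_pos.le]
  have hbeta := integrableOn_rpow_mul_one_sub_rpow (u := s + 1 / 2) (v := 1 / 2) (by linarith)
    one_half_pos
  rw [← image_laplaceSymbol_div_four, integrableOn_image_iff_integrableOn_deriv_smul_of_monotoneOn
    measurableSet_Ioo hasDerivWithinAt_laplaceSymbol_div_four monotoneOn_laplaceSymbol_div_four]
    at hbeta
  refine IntegrableOn.congr_fun (hbeta.const_mul (4 ^ s)) (fun θ hθ => ?_) measurableSet_Ioo
  simp only [smul_eq_mul, deriv_mul_beta_comp_laplaceSymbol s hθ]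
  exact mul_inv_cancel_left₀ (by positivity) _

lemma integral_laplaceSymbol_rpow {s : ℝ} (hs : -(1 / 2) < s) :
    ∫ θ in 0..π, laplaceSymbol θ ^ s = 4 ^ s * √π * Gamma (s + 1 / 2) / Gamma (s + 1) := by
  have hbeta := integral_rpow_mul_one_sub_rpow (u := s + 1 / 2) (v := 1 / 2) (by linarith)
    one_half_pos
  rw [← image_laplaceSymbol_div_four, integral_image_eq_integral_deriv_smul_of_monotoneOn
    measurableSet_Ioo hasDerivWithinAt_laplaceSymbol_div_four monotoneOn_laplaceSymbol_div_four]
    at hbeta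
  simp only [smul_eq_mul] at hbeta
  rw [setIntegral_congr_fun measurableSet_Ioo
    fun θ hθ => deriv_mul_beta_comp_laplaceSymbol s hθ, MeasureTheory.integral_const_mul,
    inv_mul_eq_iff_eq_mul₀ (by positivity), beta, Gamma_one_half_eq, add_assoc, add_halves] at hbeta
  rw [integral_of_le pi_pos.le, integral_Ioc_eq_integral_Ioo, hbeta]
  ring

/-! ### Fourier coefficients and sine moments -/

/-- The `j`-th Fourier cosine coefficient of an even `2π`-periodic function, normalised so that
`f θ = ∑ j : ℤ, cosCoeff f j * exp (i j θ)`. -/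
noncomputable def cosCoeff (f : ℝ → ℝ) (j : ℤ) : ℝ := π⁻¹ * ∫ θ in 0..π, cos (j * θ) * f θ

/-- The sine moments of powers of the symbol; up to a constant they are the Riesz potentials. -/
noncomputable def symbolMoment (s : ℝ) (n : ℕ) : ℝ :=
  ∫ θ in 0..π, sin (n * θ) * sin θ * laplaceSymbol θ ^ s

lemma abs_sin_nat_mul_le_rpow {τ : ℝ} (hτ0 : 0 ≤ τ) (hτ1 : τ ≤ 1) (n : ℕ) (θ : ℝ) :
    |sin (n * θ)| ≤ (n : ℝ) ^ τ * laplaceSymbol θ ^ (τ / 2) := by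
  calc |sin (n * θ)| ≤ |sin (n * θ)| ^ τ := by
        simpa using rpow_le_rpow_of_exponent_ge' (abs_nonneg _) (abs_sin_le_one _) hτ0 hτ1
    _ ≤ (n * laplaceSymbol θ ^ (1 / 2 : ℝ)) ^ τ := by
        gcongr
        exact (abs_sin_nat_mul_le n θ).trans (by gcongr; exact abs_sin_le_laplaceSymbol_rpow θ)
    _ = _ := by
        have hw := laplaceSymbol_nonneg θ
        rw [mul_rpow (by positivity) (by positivity), ← rpow_mul hw, one_div_mul_eq_div]

lemma abs_sin_mul_sin_mul_rpow_le {τ : ℝ} (hτ0 : 0 ≤ τ) (hτ1 : τ ≤ 1) (s : ℝ) (n : ℕ) {θ : ℝ}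
    (hθ : θ ∈ Ioc 0 π) :
    |sin (n * θ) * sin θ * laplaceSymbol θ ^ s| ≤
      (n : ℝ) ^ τ * laplaceSymbol θ ^ (s + (1 + τ) / 2) := by
  have hw := laplaceSymbol_pos hθ
  rw [abs_mul, abs_mul, abs_of_pos (rpow_pos_of_pos hw s)]
  calc |sin (n * θ)| * |sin θ| * laplaceSymbol θ ^ s
      ≤ (n : ℝ) ^ τ * laplaceSymbol θ ^ (τ / 2) * laplaceSymbol θ ^ (1 / 2 : ℝ) *
          laplaceSymbol θ ^ s := by
        gcongr
        · exact abs_sin_nat_mul_le_rpow hτ0 hτ1 n θ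
        · exact abs_sin_le_laplaceSymbol_rpow θ
    _ = _ := by
        rw [mul_assoc, mul_assoc, ← rpow_add hw, ← rpow_add hw]
        ring_nf

lemma intervalIntegrable_symbolMoment {s : ℝ} (hs : -(3 / 2) < s) (n : ℕ) :
    IntervalIntegrable (fun θ => sin (n * θ) * sin θ * laplaceSymbol θ ^ s) volume 0 π := by
  have hbound : IntervalIntegrable (fun θ => (n : ℝ) ^ (1 : ℝ) *
      laplaceSymbol θ ^ (s + (1 + 1) / 2)) volume 0 π :=
    (intervalIntegrable_laplaceSymbol_rpow (by linarith)).const_mul _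
  refine hbound.mono_fun' (Measurable.aestronglyMeasurable (by fun_prop)) ?_
  rw [uIoc_of_le pi_pos.le]
  exact ae_restrict_of_forall_mem measurableSet_Ioc fun θ hθ =>
    abs_sin_mul_sin_mul_rpow_le zero_le_one le_rfl s n hθ

lemma intervalIntegrable_cos_mul_laplaceSymbol_rpow {s : ℝ} (hs : -(1 / 2) < s) (x : ℝ) :
    IntervalIntegrable (fun θ => cos (x * θ) * laplaceSymbol θ ^ s) volume 0 π :=
  (intervalIntegrable_laplaceSymbol_rpow hs).continuousOn_mul (by fun_prop)

lemma tendsto_laplaceSymbol_rpow_mul_sin_zero {s : ℝ} (hs : -(1 / 2) < s) (n : ℕ) :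
    Tendsto (fun θ => laplaceSymbol θ ^ s * sin (n * θ)) (nhdsWithin 0 (Ioi 0)) (nhds 0) := by
  have hs' : 0 < s + 1 / 2 := by linarith
  have hlim : Tendsto (fun θ => (n : ℝ) * laplaceSymbol θ ^ (s + 1 / 2))
      (nhdsWithin 0 (Ioi 0)) (nhds 0) := by
    have hcont : Continuous fun θ => (n : ℝ) * laplaceSymbol θ ^ (s + 1 / 2) :=
      continuous_const.mul (continuous_laplaceSymbol.rpow_const fun _ => Or.inr hs'.le)
    have hzero : (n : ℝ) * laplaceSymbol 0 ^ (s + 1 / 2) = 0 := by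
      rw [laplaceSymbol_zero, zero_rpow hs'.ne', mul_zero]
    exact tendsto_nhdsWithin_of_tendsto_nhds (hcont.tendsto' 0 0 hzero)
  refine squeeze_zero_norm' ?_ hlim
  filter_upwards [Ioc_mem_nhdsGT pi_pos] with θ hθ
  have hw := laplaceSymbol_pos hθ
  rw [norm_mul, norm_of_nonneg (by positivity), norm_eq_abs, rpow_add hw, mul_left_comm]
  gcongr
  simpa using abs_sin_nat_mul_le_rpow zero_le_one le_rfl n θ

lemma tendsto_laplaceSymbol_rpow_mul_sin_pi (s : ℝ) (n : ℕ) :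
    Tendsto (fun θ => laplaceSymbol θ ^ s * sin (n * θ)) (nhdsWithin π (Iio π)) (nhds 0) := by
  have hcont : ContinuousAt (fun θ => laplaceSymbol θ ^ s * sin (n * θ)) π :=
    (continuous_laplaceSymbol.continuousAt.rpow_const
      (Or.inl (laplaceSymbol_pos ⟨pi_pos, le_rfl⟩).ne')).mul (by fun_prop)
  simpa using hcont.tendsto.mono_left nhdsWithin_le_nhds

/-- Integration by parts against the derivative of `laplaceSymbol θ ^ (s + 1) * sin (n * θ)`. -/
lemma nat_mul_cosCoeff_laplaceSymbol_rpow {s : ℝ} (hs : -(3 / 2) < s) (n : ℕ) :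
    n * cosCoeff (fun θ => laplaceSymbol θ ^ (s + 1)) n =
      -(2 * (s + 1) / π) * symbolMoment s n := by
  have hderiv : ∀ θ ∈ Ioo 0 π, HasDerivAt (fun θ => laplaceSymbol θ ^ (s + 1) * sin (n * θ))
      (2 * (s + 1) * (sin (n * θ) * sin θ * laplaceSymbol θ ^ s) +
        n * (cos (n * θ) * laplaceSymbol θ ^ (s + 1))) θ := by
    intro θ hθ
    have hsin : HasDerivAt (fun θ => sin (n * θ)) (cos (n * θ) * (n * 1)) θ :=
      ((hasDerivAt_id θ).const_mul (n : ℝ)).sin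
    refine ((hasDerivAt_laplaceSymbol_rpow (s + 1) (Ioo_subset_Ioc_self hθ)).mul
      hsin).congr_deriv ?_
    rw [add_sub_cancel_right]
    ring
  have hint_sin := (intervalIntegrable_symbolMoment hs n).const_mul (2 * (s + 1))
  have hint_cos := (intervalIntegrable_cos_mul_laplaceSymbol_rpow (s := s + 1) (by linarith)
    n).const_mul (n : ℝ)
  have hparts := integral_eq_sub_of_hasDerivAt_of_tendsto pi_pos hderiv (hint_sin.add hint_cos)
    (tendsto_laplaceSymbol_rpow_mul_sin_zero (by linarith) n)
    (tendsto_laplaceSymbol_rpow_mul_sin_pi _ n)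
  rw [integral_add hint_sin hint_cos, intervalIntegral.integral_const_mul,
    intervalIntegral.integral_const_mul, sub_self] at hparts
  rw [cosCoeff, symbolMoment, Int.cast_natCast]
  linear_combination π⁻¹ * hparts

lemma cosCoeff_add_cosCoeff_laplaceSymbol_rpow {s : ℝ} (hs : -(3 / 2) < s) (n : ℕ) :
    cosCoeff (fun θ => laplaceSymbol θ ^ (s + 1)) (n + 1 : ℕ) +
      cosCoeff (fun θ => laplaceSymbol θ ^ (s + 1)) n =
    2 / π * (symbolMoment s (n + 1) - symbolMoment s n) := by
  have htrig : ∀ θ : ℝ, laplaceSymbol θ * (cos ((n + 1 : ℕ) * θ) + cos (n * θ)) =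
      2 * (sin ((n + 1 : ℕ) * θ) - sin (n * θ)) * sin θ := by
    intro θ
    rw [Nat.cast_succ, add_one_mul, sin_add, cos_add, laplaceSymbol]
    linear_combination -2 * cos (n * θ) * sin_sq_add_cos_sq θ
  have hs' : -(1 / 2) < s + 1 := by linarith
  simp only [cosCoeff, symbolMoment, Int.cast_natCast]
  rw [← mul_add, ← integral_add (intervalIntegrable_cos_mul_laplaceSymbol_rpow hs' _)
    (intervalIntegrable_cos_mul_laplaceSymbol_rpow hs' _),
    ← integral_sub (intervalIntegrable_symbolMoment hs _) (intervalIntegrable_symbolMoment hs _),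
    div_eq_inv_mul, mul_assoc]
  congr 1
  rw [← intervalIntegral.integral_const_mul]
  refine integral_congr_ae (ae_of_all _ fun θ hθ => ?_)
  rw [uIoc_of_le pi_pos.le] at hθ
  rw [rpow_add_one (laplaceSymbol_pos hθ).ne']
  linear_combination laplaceSymbol θ ^ s * htrig θ

lemma cosCoeff_laplaceSymbol_rpow_succ {s : ℝ} (hs : -(1 / 2) < s) (n : ℕ) :
    (n + 1 + s) * cosCoeff (fun θ => laplaceSymbol θ ^ s) (n + 1 : ℕ) =
      (n - s) * cosCoeff (fun θ => laplaceSymbol θ ^ s) n := by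
  have hs' : -(3 / 2) < s - 1 := by linarith
  have hn := nat_mul_cosCoeff_laplaceSymbol_rpow hs' n
  have hn1 := nat_mul_cosCoeff_laplaceSymbol_rpow hs' (n + 1)
  have hadd := cosCoeff_add_cosCoeff_laplaceSymbol_rpow hs' n
  rw [sub_add_cancel] at hn hn1 hadd
  push_cast at hn1 hadd ⊢
  linear_combination s * hadd + hn1 - hn

lemma symbolMoment_succ {s : ℝ} (hs : -(3 / 2) < s) (n : ℕ) :
    n * (n + s + 2) * symbolMoment s (n + 1) = (n + 1) * (n - s - 1) * symbolMoment s n := by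
  have hn := nat_mul_cosCoeff_laplaceSymbol_rpow hs n
  have hn1 := nat_mul_cosCoeff_laplaceSymbol_rpow hs (n + 1)
  have hadd := cosCoeff_add_cosCoeff_laplaceSymbol_rpow hs n
  push_cast at hn1 hadd
  field_simp at hn hn1 hadd
  linear_combination (n * (n + 1) * hadd - n * hn1 - (n + 1) * hn) / (-2)

lemma symbolMoment_one {s : ℝ} (hs : -(3 / 2) < s) :
    symbolMoment s 1 = 4 ^ (s + 1) * √π * Gamma (s + 3 / 2) / (2 * Gamma (s + 3)) := by
  have hsplit : symbolMoment s 1 =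
      ∫ θ in 0..π, (laplaceSymbol θ ^ (s + 1) - 1 / 4 * laplaceSymbol θ ^ (s + 2)) := by
    refine integral_congr_ae (ae_of_all _ fun θ hθ => ?_)
    rw [uIoc_of_le pi_pos.le] at hθ
    have hw := laplaceSymbol_pos hθ
    rw [Nat.cast_one, one_mul, ← sq, sin_sq_eq_laplaceSymbol, rpow_add hw, rpow_add hw, rpow_one,
      rpow_two]
    ring
  have hΓ : Gamma (s + 2) ≠ 0 := (Gamma_pos_of_pos (by linarith)).ne'
  have hs2 : s + 2 ≠ 0 := by linarith
  have hpow : (4 : ℝ) ^ (s + 2) = 4 ^ (s + 1) * 4 := by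
    rw [← rpow_add_one four_ne_zero, add_assoc, one_add_one_eq_two]
  rw [hsplit, integral_sub (intervalIntegrable_laplaceSymbol_rpow (by linarith))
    ((intervalIntegrable_laplaceSymbol_rpow (by linarith)).const_mul _),
    intervalIntegral.integral_const_mul, integral_laplaceSymbol_rpow (by linarith),
    integral_laplaceSymbol_rpow (by linarith), show s + 1 + 1 / 2 = s + 3 / 2 by ring,
    show s + 1 + 1 = s + 2 by ring, show s + 2 + 1 / 2 = s + 3 / 2 + 1 by ring,
    Gamma_add_one (by linarith : s + 3 / 2 ≠ 0), show s + 3 = s + 2 + 1 by ring,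
    Gamma_add_one hs2, hpow]
  field_simp
  ring

lemma Riesz_succ {α : ℝ} {n : ℕ} (hn1 : n + α - 1 ≠ 0) (hn2 : n - α + 2 ≠ 0) :
    n * (n - α + 2) * Riesz α (n + 1) = (n + 1) * (n + α - 1) * Riesz α n := by
  unfold Riesz
  push_cast
  rw [show (n : ℝ) + 1 + α - 1 = n + α - 1 + 1 by ring,
    show (n : ℝ) + 1 - α + 2 = n - α + 2 + 1 by ring, Gamma_add_one hn1, Gamma_add_one hn2]
  field_simp

lemma Riesz_eq_symbolMoment {α : ℝ} (hα0 : 0 < α) (hα1 : α < 3 / 2) (n : ℕ) :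
    Riesz α n = √2 / √π * symbolMoment (-α) n := by
  rcases Nat.eq_zero_or_pos n with rfl | hn
  · simp [Riesz, symbolMoment]
  induction n, hn using Nat.le_induction with
  | base =>
    have hΓα : Gamma α ≠ 0 := (Gamma_pos_of_pos hα0).ne'
    have hΓα' : Gamma (3 - α) ≠ 0 := (Gamma_pos_of_pos (by linarith)).ne'
    rw [Nat.succ_eq_add_one, zero_add, symbolMoment_one (by linarith), Riesz, Nat.cast_one,
      add_sub_cancel_left, show 1 - α + 2 = 3 - α by ring, neg_add_eq_sub, neg_add_eq_sub,
      neg_add_eq_sub, sub_eq_add_neg 1 α, rpow_add four_pos, rpow_one, rpow_neg zero_le_four]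
    field_simp
    rw [sq_sqrt zero_le_two]
  | succ n hn ih =>
    have hn' : (1 : ℝ) ≤ n := by exact_mod_cast hn
    have hne : (n : ℝ) * (n - α + 2) ≠ 0 := mul_ne_zero (by linarith) (by linarith)
    apply mul_left_cancel₀ hne
    rw [Riesz_succ (by linarith) (by linarith), ih]
    linear_combination (-√2 / √π) * symbolMoment_succ (s := -α) (by linarith) n

/-! ### Riesz potentials and the kernel -/

lemma Riesz_nonneg {α : ℝ} (hα0 : 0 < α) (hα1 : α < 3 / 2) (n : ℕ) : 0 ≤ Riesz α n := by
  rcases n.eq_zero_or_pos with rfl | hn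
  · simp [Riesz]
  have hn' : (1 : ℝ) ≤ n := by exact_mod_cast hn
  have : 0 < Gamma (3 / 2 - α) := Gamma_pos_of_pos (by linarith)
  have : 0 < Gamma (n + α - 1) := Gamma_pos_of_pos (by linarith)
  have : 0 < Gamma (n - α + 2) := Gamma_pos_of_pos (by linarith)
  have : 0 < Gamma α := Gamma_pos_of_pos hα0
  unfold Riesz
  positivity

lemma exists_Riesz_le_rpow {α : ℝ} (hα0 : 0 < α) (hα1 : α < 3 / 2) :
    ∃ C, 0 ≤ C ∧ ∀ n : ℕ, 1 ≤ n → Riesz α n ≤ C * (n : ℝ) ^ (2 * α - 2) := by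
  obtain ⟨C, hC0, hC⟩ := exists_Gamma_div_Gamma_le_rpow (x := α - 1) (y := 2 - α) (by linarith)
    (by linarith) (by linarith)
  have : 0 < Gamma (3 / 2 - α) := Gamma_pos_of_pos (by linarith)
  have : 0 < Gamma α := Gamma_pos_of_pos hα0
  set A := 4 / (4 ^ α * √2) * Gamma (3 / 2 - α) / Gamma α
  refine ⟨A * C, by positivity, fun n hn => ?_⟩
  have hn' : (0 : ℝ) < n := by exact_mod_cast hn
  calc Riesz α n = A * (n * (Gamma (n + (α - 1)) / Gamma (n + (2 - α)))) := by
        rw [Riesz, add_sub_assoc, show (n : ℝ) - α + 2 = n + (2 - α) by ring]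
        ring
    _ ≤ A * (n * (C * (n : ℝ) ^ (α - 1 - (2 - α)))) := by
        gcongr
        exact hC n hn
    _ = A * C * (n : ℝ) ^ (2 * α - 2) := by
        rw [show 2 * α - 2 = α - 1 - (2 - α) + 1 by ring, rpow_add_one hn'.ne']
        ring

lemma exists_abs_cosCoeff_le_rpow {s : ℝ} (hs0 : -(1 / 2) < s) (hs1 : s < 1) :
    ∃ C, 0 ≤ C ∧ ∀ n : ℕ, 1 ≤ n →
      |cosCoeff (fun θ => laplaceSymbol θ ^ s) n| ≤ C * (n : ℝ) ^ (-(1 + 2 * s)) := by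
  obtain ⟨C, hC0, hC⟩ := exists_Riesz_le_rpow (α := 1 - s) (by linarith) (by linarith)
  refine ⟨|2 * s / √(2 * π)| * C, by positivity, fun n hn => ?_⟩
  have hn' : (0 : ℝ) < n := by exact_mod_cast hn
  have hcoeff : n * cosCoeff (fun θ => laplaceSymbol θ ^ s) n =
      -(2 * s / √(2 * π)) * Riesz (1 - s) n := by
    have hmoment := nat_mul_cosCoeff_laplaceSymbol_rpow (s := s - 1) (by linarith) n
    rw [sub_add_cancel] at hmoment
    rw [hmoment, Riesz_eq_symbolMoment (by linarith) (by linarith), neg_sub,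
      sqrt_mul zero_le_two]
    field_simp
    rw [sq_sqrt pi_pos.le]
    ring
  have habs : n * |cosCoeff (fun θ => laplaceSymbol θ ^ s) n| ≤
      |2 * s / √(2 * π)| * (C * (n : ℝ) ^ (2 * (1 - s) - 2)) := by
    rw [← Nat.abs_cast n, ← abs_mul, hcoeff, abs_mul, abs_neg, Nat.abs_cast,
      abs_of_nonneg (Riesz_nonneg (by linarith) (by linarith) n)]
    gcongr
    exact hC n hn
  rw [show 2 * (1 - s) - 2 = -(1 + 2 * s) + 1 by ring, rpow_add_one hn'.ne'] at habs
  refine le_of_mul_le_mul_left (habs.trans_eq ?_) hn'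
  ring

lemma cosCoeff_neg (f : ℝ → ℝ) (j : ℤ) : cosCoeff f (-j) = cosCoeff f j := by
  simp only [cosCoeff, Int.cast_neg, neg_mul, cos_neg]

lemma rbinom_symm (a b : ℝ) : rbinom a (a - b) = rbinom a b := by
  rw [rbinom, rbinom, sub_sub_cancel, mul_comm (Gamma (a - b + 1))]

lemma rbinom_succ {s : ℝ} {n : ℕ} (hs : -1 < s) :
    (n + 1 + s) * rbinom (2 * s) (s + (n + 1 : ℕ)) = (s - n) * rbinom (2 * s) (s + n) := by
  have hpos : 0 < s + n + 1 := by linarith [n.cast_nonneg (α := ℝ)]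
  have hΓ : Gamma (s + n + 1) ≠ 0 := (Gamma_pos_of_pos hpos).ne'
  rw [rbinom, rbinom, Nat.cast_succ, show s + ((n : ℝ) + 1) + 1 = s + n + 1 + 1 by ring,
    Gamma_add_one hpos.ne', show 2 * s - (s + ((n : ℝ) + 1)) + 1 = s - n by ring,
    show 2 * s - (s + (n : ℝ)) + 1 = s - n + 1 by ring]
  rcases eq_or_ne (s - n) 0 with hzero | hne
  · rw [hzero, Gamma_zero]
    simp
  · rw [Gamma_add_one hne]
    have : (n : ℝ) + 1 + s ≠ 0 := by linarith
    field_simp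
    ring

lemma rbinom_two_mul_self {s : ℝ} (hs : -(1 / 2) < s) :
    rbinom (2 * s) s = π⁻¹ * ∫ θ in 0..π, laplaceSymbol θ ^ s := by
  have hdup := Gamma_mul_Gamma_add_half (s + 1 / 2)
  rw [show s + 1 / 2 + 1 / 2 = s + 1 by ring, show 2 * (s + 1 / 2) = 2 * s + 1 by ring,
    show 1 - (2 * s + 1) = -(2 * s) by ring, rpow_neg zero_le_two, rpow_mul zero_le_two] at hdup
  have hΓ : Gamma (s + 1) ≠ 0 := (Gamma_pos_of_pos (by linarith)).ne'
  have hpow : (4 : ℝ) ^ s = (2 ^ (2 : ℝ)) ^ s := by norm_num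
  rw [integral_laplaceSymbol_rpow hs, rbinom, two_mul, add_sub_cancel_right, ← two_mul, hpow]
  field_simp at hdup ⊢
  linear_combination -√π * hdup - Gamma (s * 2 + 1) * mul_self_sqrt pi_pos.le

lemma neg_one_pow_mul_rbinom {s : ℝ} (hs : -(1 / 2) < s) (n : ℕ) :
    (-1) ^ n * rbinom (2 * s) (s + n) = cosCoeff (fun θ => laplaceSymbol θ ^ s) n := by
  induction n with
  | zero =>
    simpa [cosCoeff] using rbinom_two_mul_self hs
  | succ n ih =>
    have hne : n + 1 + s ≠ 0 := by
      have := n.cast_nonneg (α := ℝ)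
      linarith
    apply mul_left_cancel₀ hne
    rw [cosCoeff_laplaceSymbol_rpow_succ hs, ← ih, mul_left_comm, rbinom_succ (by linarith)]
    ring

lemma neg_one_zpow_mul_rbinom {s : ℝ} (hs : -(1 / 2) < s) (j : ℤ) :
    (-1) ^ j * rbinom (2 * s) (s + j) = cosCoeff (fun θ => laplaceSymbol θ ^ s) j := by
  obtain ⟨n, rfl | rfl⟩ := j.eq_nat_or_neg
  · exact_mod_cast neg_one_pow_mul_rbinom hs n
  · rw [cosCoeff_neg, ← neg_one_pow_mul_rbinom hs, ← rbinom_symm, zpow_neg, ← inv_zpow, inv_neg_one,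
      zpow_natCast]
    push_cast
    ring_nf

lemma Kker_eq_cosCoeff_sub_cosCoeff {σ : ℝ} (hσ : -(1 / 2) < σ) (m n : ℕ) :
    Kker σ m n = cosCoeff (fun θ => laplaceSymbol θ ^ σ) (m - n) -
      cosCoeff (fun θ => laplaceSymbol θ ^ σ) (m + n) := by
  rw [← neg_one_zpow_mul_rbinom hσ, ← neg_one_zpow_mul_rbinom hσ, Kker,
    zpow_sub₀ (neg_ne_zero.2 one_ne_zero), zpow_add₀ (neg_ne_zero.2 one_ne_zero), pow_add]
  simp only [zpow_natCast]
  rw [div_eq_mul_inv, ← inv_pow, inv_neg_one]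
  push_cast
  ring_nf

lemma Kker_comm {σ : ℝ} (hσ : -(1 / 2) < σ) (m n : ℕ) : Kker σ m n = Kker σ n m := by
  rw [Kker_eq_cosCoeff_sub_cosCoeff hσ, Kker_eq_cosCoeff_sub_cosCoeff hσ, ← neg_sub (n : ℤ),
    cosCoeff_neg, add_comm (m : ℤ)]

lemma exists_abs_Kker_le_rpow {σ : ℝ} (hσ0 : 0 ≤ σ) (hσ1 : σ < 1) :
    ∃ C, 0 ≤ C ∧ ∀ m n : ℕ, m < n → |Kker σ m n| ≤ C * ((n : ℝ) - m) ^ (-(1 + 2 * σ)) := by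
  obtain ⟨C, hC0, hC⟩ := exists_abs_cosCoeff_le_rpow (by linarith : -(1 / 2) < σ) hσ1
  refine ⟨2 * C, by positivity, fun m n hmn => ?_⟩
  have hdiff : ((m : ℤ) - n) = -((n - m : ℕ) : ℤ) := by omega
  have hsum : ((m : ℤ) + n) = (m + n : ℕ) := by push_cast; rfl
  have hpos : (0 : ℝ) < n - m := sub_pos.2 (Nat.cast_lt.2 hmn)
  rw [Kker_eq_cosCoeff_sub_cosCoeff (by linarith), hdiff, hsum, cosCoeff_neg, two_mul, add_mul]
  refine (abs_sub _ _).trans (add_le_add ?_ ?_)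
  · exact (hC (n - m) (by omega)).trans_eq (by rw [Nat.cast_sub hmn.le])
  · refine (hC (m + n) (by omega)).trans (mul_le_mul_of_nonneg_left ?_ hC0)
    refine rpow_le_rpow_of_nonpos hpos ?_ (by linarith)
    push_cast
    linarith [m.cast_nonneg (α := ℝ)]

lemma summable_abs_Kker_mul_rpow {σ τ : ℝ} (hσ0 : 0 ≤ σ) (hσ1 : σ < 1) (hτ0 : 0 ≤ τ)
    (hτ : τ < 2 * σ) (m : ℕ) : Summable fun n : ℕ => |Kker σ m n| * (n : ℝ) ^ τ := by
  obtain ⟨C, hC0, hC⟩ := exists_abs_Kker_le_rpow hσ0 hσ1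
  rw [← summable_nat_add_iff (m + 1)]
  have hsum : Summable fun j : ℕ => ((j + 1 : ℕ) : ℝ) ^ (-(1 + 2 * σ - τ)) :=
    (summable_nat_add_iff 1).2 (summable_nat_rpow.2 (by linarith))
  refine (hsum.mul_left (C * ((m : ℝ) + 1) ^ τ)).of_nonneg_of_le (fun j => by positivity)
    fun j => ?_
  have hker := hC m (j + (m + 1)) (by omega)
  have hdiff : ((j + (m + 1) : ℕ) : ℝ) - m = (j + 1 : ℕ) := by push_cast; ring
  rw [hdiff] at hker
  calc |Kker σ m (j + (m + 1))| * ((j + (m + 1) : ℕ) : ℝ) ^ τ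
      ≤ C * ((j + 1 : ℕ) : ℝ) ^ (-(1 + 2 * σ)) * (((m : ℝ) + 1) * (j + 1 : ℕ)) ^ τ := by
        gcongr
        push_cast
        nlinarith [m.cast_nonneg (α := ℝ), j.cast_nonneg (α := ℝ)]
    _ = _ := by
        rw [mul_rpow (by positivity) (by positivity), neg_sub, sub_eq_add_neg,
          rpow_add (by positivity)]
        ring

/-! ### The kernel applied to Riesz potentials -/

lemma fourier_two_pi_coe_apply (n : ℤ) (x : ℝ) :
    fourier n (x : AddCircle (2 * π)) = Complex.exp (n * x * Complex.I) := by
  have hπ : (π : ℂ) ≠ 0 := Complex.ofReal_ne_zero.2 pi_ne_zero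
  rw [fourier_coe_apply]
  push_cast
  congr 1
  field_simp

lemma integral_exp_mul_of_even {f : ℝ → ℝ} (hf : Continuous f) (heven : Function.Even f) (n : ℤ) :
    ∫ x in -π..π, Complex.exp ((-n : ℤ) * x * Complex.I) * f x =
      ((2 * π * cosCoeff f n : ℝ) : ℂ) := by
  set g : ℝ → ℂ := fun x => Complex.exp ((-n : ℤ) * x * Complex.I) * f x
  have hg : Continuous g := by fun_prop
  have hsymm : ∀ x, g (-x) + g x = ((2 * (cos (n * x) * f x) : ℝ) : ℂ) := by
    intro x
    simp only [g, heven x]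
    push_cast
    rw [← add_mul, ← mul_assoc, Complex.two_cos]
    ring_nf
  calc ∫ x in -π..π, g x = (∫ x in -π..0, g x) + ∫ x in 0..π, g x :=
        (integral_add_adjacent_intervals (hg.intervalIntegrable _ _)
          (hg.intervalIntegrable _ _)).symm
    _ = ∫ x in 0..π, (g (-x) + g x) := by
        have hg_neg : Continuous fun x => g (-x) := hg.comp continuous_neg
        rw [integral_add (hg_neg.intervalIntegrable _ _) (hg.intervalIntegrable _ _),
          intervalIntegral.integral_comp_neg, neg_zero]
    _ = _ := by
        simp_rw [hsymm]
        rw [intervalIntegral.integral_ofReal, intervalIntegral.integral_const_mul, cosCoeff,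
          mul_assoc, mul_inv_cancel_left₀ pi_ne_zero]

lemma fourierCoeff_eq_cosCoeff [Fact (0 < 2 * π)] {f : ℝ → ℝ} (hf : Continuous f)
    (heven : Function.Even f) (hper : Function.Periodic (fun x => (f x : ℂ)) (2 * π)) (n : ℤ) :
    fourierCoeff hper.lift n = cosCoeff f n := by
  rw [fourierCoeff_eq_intervalIntegral _ n (-π), show -π + 2 * π = π by ring]
  simp only [fourier_two_pi_coe_apply, Function.Periodic.lift_coe, smul_eq_mul]
  rw [integral_exp_mul_of_even hf heven, Complex.real_smul, ← Complex.ofReal_mul,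
    one_div, inv_mul_cancel_left₀ two_pi_pos.ne']

lemma hasSum_cosCoeff_mul_exp {f : ℝ → ℝ} (hf : Continuous f) (heven : Function.Even f)
    (hper : Function.Periodic f (2 * π)) (hsum : Summable fun n : ℕ => |cosCoeff f n|) (θ : ℝ) :
    HasSum (fun j : ℤ => (cosCoeff f j : ℂ) * Complex.exp (j * θ * Complex.I)) (f θ) := by
  have : Fact (0 < 2 * π) := ⟨two_pi_pos⟩
  have hper' : Function.Periodic (fun x => (f x : ℂ)) (2 * π) := fun x => congrArg _ (hper x)
  let F : C(AddCircle (2 * π), ℂ) :=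
    ⟨hper'.lift, continuous_coinduced_dom.2 (Complex.continuous_ofReal.comp hf)⟩
  have hcoeff : fourierCoeff F = fun n => (cosCoeff f n : ℂ) :=
    funext (fourierCoeff_eq_cosCoeff hf heven hper')
  have hsum' : Summable (fourierCoeff F) := by
    rw [hcoeff]
    refine Summable.of_norm ?_
    simp only [Complex.norm_real, norm_eq_abs]
    exact Summable.of_nat_of_neg hsum (by simpa only [cosCoeff_neg] using hsum)
  have hpoint : HasSum _ (f θ : ℂ) :=
    has_pointwise_sum_fourier_series_of_summable hsum' (θ : AddCircle (2 * π))
  simpa only [hcoeff, fourier_two_pi_coe_apply, smul_eq_mul] using hpoint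

lemma hasSum_cosCoeff_sub_mul_sin {f : ℝ → ℝ} (hf : Continuous f) (heven : Function.Even f)
    (hper : Function.Periodic f (2 * π)) (hsum : Summable fun n : ℕ => |cosCoeff f n|) (m : ℤ)
    (θ : ℝ) : HasSum (fun n : ℤ => cosCoeff f (m - n) * sin (n * θ)) (f θ * sin (m * θ)) := by
  have hfourier := (Equiv.subLeft m).hasSum_iff.2 (hasSum_cosCoeff_mul_exp hf heven hper hsum θ)
  have him := (Complex.hasSum_im
    (hfourier.mul_left (Complex.exp ((-(m * θ) : ℝ) * Complex.I)))).neg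
  convert! him using 1
  · ext n
    rw [Function.comp_apply, Equiv.subLeft_apply, mul_left_comm, ← Complex.exp_add,
      Complex.im_ofReal_mul, show ((-(m * θ) : ℝ) : ℂ) * Complex.I +
        ((m - n : ℤ) : ℂ) * θ * Complex.I = ((-(n * θ) : ℝ) : ℂ) * Complex.I by push_cast; ring,
      Complex.exp_ofReal_mul_I_im, sin_neg, mul_neg, neg_neg]
  · rw [mul_comm (Complex.exp _), Complex.im_ofReal_mul, Complex.exp_ofReal_mul_I_im, sin_neg,
      mul_neg, neg_neg]

lemma summable_abs_cosCoeff_laplaceSymbol_rpow {s : ℝ} (hs0 : 0 < s) (hs1 : s < 1) :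
    Summable fun n : ℕ => |cosCoeff (fun θ => laplaceSymbol θ ^ s) n| := by
  obtain ⟨C, -, hC⟩ := exists_abs_cosCoeff_le_rpow (by linarith : -(1 / 2) < s) hs1
  have hbound : Summable fun n : ℕ => C * (n : ℝ) ^ (-(1 + 2 * s)) :=
    (summable_nat_rpow.2 (by linarith)).mul_left C
  rw [← summable_nat_add_iff 1] at hbound ⊢
  exact hbound.of_nonneg_of_le (fun _ => abs_nonneg _) fun n => hC (n + 1) n.succ_pos

lemma hasSum_Kker_mul_sin {σ : ℝ} (hσ0 : 0 < σ) (hσ1 : σ < 1) (m : ℕ) (θ : ℝ) :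
    HasSum (fun n : ℕ => Kker σ m n * sin (n * θ)) (laplaceSymbol θ ^ σ * sin (m * θ)) := by
  have hcont : Continuous fun θ => laplaceSymbol θ ^ σ :=
    continuous_laplaceSymbol.rpow_const fun _ => Or.inr hσ0.le
  have hfold := (hasSum_cosCoeff_sub_mul_sin hcont (fun θ => by simp [laplaceSymbol])
    (fun θ => by simp [laplaceSymbol]) (summable_abs_cosCoeff_laplaceSymbol_rpow hσ0 hσ1)
    m θ).nat_add_neg
  simp only [Int.cast_zero, zero_mul, sin_zero, mul_zero, add_zero, Int.cast_neg, neg_mul, sin_neg,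
    sub_neg_eq_add, mul_neg, Int.cast_natCast, ← sub_eq_add_neg, ← sub_mul] at hfold
  simpa only [Kker_eq_cosCoeff_sub_cosCoeff (by linarith : -(1 / 2) < σ)] using hfold

/-- Fubini on `(0, π)`: both sides are integrals of `sin θ * laplaceSymbol θ ^ (-α)` against the two
sides of `hasSum_Kker_mul_sin`. -/
lemma hasSum_Kker_mul_Riesz {σ α : ℝ} (hσ0 : 0 < σ) (hσ1 : σ < 1) (hσα : σ < α)
    (hα : α < 1 + σ / 2) (m : ℕ) :
    HasSum (fun n : ℕ => Kker σ m n * Riesz α n) (Riesz (α - σ) m) := by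
  have hbound : IntervalIntegrable (fun θ => laplaceSymbol θ ^ (-α + (1 + σ) / 2)) volume 0 π :=
    intervalIntegrable_laplaceSymbol_rpow (by linarith)
  have hsummable := summable_abs_Kker_mul_rpow hσ0.le hσ1 hσ0.le (by linarith) m
  have hmoment : HasSum (fun n : ℕ => Kker σ m n * symbolMoment (-α) n)
      (symbolMoment (-(α - σ)) m) := by
    simp only [symbolMoment, ← intervalIntegral.integral_const_mul]
    refine hasSum_integral_of_dominated_convergence
      (fun n θ => |Kker σ m n| * (n : ℝ) ^ σ * laplaceSymbol θ ^ (-α + (1 + σ) / 2))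
      (fun n => Measurable.aestronglyMeasurable (by fun_prop)) (fun n => ?_) ?_ ?_ ?_
    · refine ae_of_all _ fun θ hθ => ?_
      rw [uIoc_of_le pi_pos.le] at hθ
      rw [norm_mul, norm_eq_abs, mul_assoc |Kker σ m n|]
      exact mul_le_mul_of_nonneg_left (abs_sin_mul_sin_mul_rpow_le hσ0.le hσ1.le (-α) n hθ)
        (abs_nonneg _)
    · exact ae_of_all _ fun θ _ => hsummable.mul_right _
    · simp_rw [tsum_mul_right]
      exact hbound.const_mul _
    · refine ae_of_all _ fun θ hθ => ?_
      rw [uIoc_of_le pi_pos.le] at hθ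
      convert! (hasSum_Kker_mul_sin hσ0 hσ1 m θ).mul_right
        (sin θ * laplaceSymbol θ ^ (-α)) using 1
      · ext n
        ring
      · rw [neg_sub, sub_eq_add_neg, rpow_add (laplaceSymbol_pos hθ)]
        ring
  convert! hmoment.mul_left (√2 / √π) using 1
  · ext n
    rw [Riesz_eq_symbolMoment (by linarith) (by linarith), mul_left_comm]
  · exact Riesz_eq_symbolMoment (by linarith) (by linarith) m

lemma Wweight_mul_Riesz {σ α : ℝ} (hσ : 0 < σ) (hσα : σ < α) (hα : α < 3 / 2) (n : ℕ) :
    Wweight σ α n * Riesz α n = Riesz (α - σ) n := by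
  rcases n.eq_zero_or_pos with rfl | hn
  · simp [Riesz]
  have hn' : (1 : ℝ) ≤ n := by exact_mod_cast hn
  have hα_ne : Gamma α ≠ 0 := (Gamma_pos_of_pos (by linarith)).ne'
  have hhalf_ne : Gamma (3 / 2 - α) ≠ 0 := (Gamma_pos_of_pos (by linarith)).ne'
  have hadd_ne : Gamma (n + α - 1) ≠ 0 := (Gamma_pos_of_pos (by linarith)).ne'
  have hsub_ne : Gamma (n - α + 2) ≠ 0 := (Gamma_pos_of_pos (by linarith)).ne'
  rw [Wweight, Riesz, Riesz, ← sub_add, ← add_sub_assoc, ← sub_add (n : ℝ), rpow_sub four_pos]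
  generalize Gamma (3 / 2 - α) = g at hhalf_ne ⊢
  field_simp

end Symbol

/-! ### The energy of the logarithmic cutoff -/

/-- The logarithmic cutoff at scale `k`: it is `1` up to `k`, vanishes from `k ^ 2` on and is affine
in `log n` in between. For `k ≥ 2` it is the function `φ_k`, with the cases written as a clamp. -/
noncomputable def logCutoff (k n : ℕ) : ℝ := max 0 (min 1 (2 - log n / log k))

lemma logCutoff_nonneg (k n : ℕ) : 0 ≤ logCutoff k n := le_max_left _ _

lemma logCutoff_le_one (k n : ℕ) : logCutoff k n ≤ 1 := max_le zero_le_one (min_le_left _ _)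

lemma logCutoff_eq_one {k n : ℕ} (hnk : n ≤ k) : logCutoff k n = 1 := by
  have hratio : log n / log k ≤ 1 := by
    refine div_le_one_of_le₀ ?_ (log_natCast_nonneg k)
    rcases n.eq_zero_or_pos with rfl | hn
    · simpa using log_natCast_nonneg k
    · exact log_le_log (by exact_mod_cast hn) (by exact_mod_cast hnk)
  rw [logCutoff, min_eq_left (by linarith), max_eq_right zero_le_one]

lemma logCutoff_eq_zero {k n : ℕ} (hk : 2 ≤ k) (hkn : k ^ 2 ≤ n) : logCutoff k n = 0 := by
  have hratio : 2 ≤ log n / log k := by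
    have hlog := log_le_log (by positivity) (show (k : ℝ) ^ 2 ≤ n by exact_mod_cast hkn)
    rw [log_pow] at hlog
    rw [le_div_iff₀ (log_pos (by exact_mod_cast hk))]
    exact_mod_cast hlog
  exact max_eq_left ((min_le_right _ _).trans (by linarith))

lemma logCutoff_eq_ite {k : ℕ} (hk : 2 ≤ k) (n : ℕ) :
    logCutoff k n = if n ≤ k then 1 else if n ≤ k ^ 2 then 2 - log n / log k else 0 := by
  have hk0 : (0 : ℝ) < k := by positivity
  have hlog : 0 < log k := log_pos (by exact_mod_cast hk)
  split_ifs with h1 h2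
  · exact logCutoff_eq_one h1
  · have hlower : 1 ≤ log n / log k := (one_le_div hlog).2
      (log_le_log hk0 (by exact_mod_cast (not_le.1 h1).le))
    have hupper : log n / log k ≤ 2 := by
      have hn0 : (0 : ℝ) < n := by exact_mod_cast (zero_lt_two.trans_le hk).trans (not_le.1 h1)
      have hle := log_le_log hn0 (show (n : ℝ) ≤ (k : ℝ) ^ 2 by exact_mod_cast h2)
      rw [log_pow] at hle
      exact (div_le_iff₀ hlog).2 (by exact_mod_cast hle)
    rw [logCutoff, min_eq_right (by linarith), max_eq_right (by linarith)]
  · exact logCutoff_eq_zero hk (not_le.1 h2).le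

lemma abs_logCutoff_sub_le (k m n : ℕ) :
    |logCutoff k m - logCutoff k n| ≤ |log n - log m| / log k := by
  have hmax : ∀ x y : ℝ, |max 0 x - max 0 y| ≤ |x - y| := fun x y => by
    simpa using abs_max_sub_max_le_max 0 x 0 y
  have hmin : ∀ x y : ℝ, |min 1 x - min 1 y| ≤ |x - y| := fun x y => by
    simpa using abs_min_sub_min_le_max 1 x 1 y
  refine ((hmax _ _).trans (hmin _ _)).trans_eq ?_
  rw [sub_sub_sub_cancel_left, ← sub_div, abs_div, abs_of_nonneg (log_natCast_nonneg k)]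

lemma sq_logCutoff_sub_le {k m n : ℕ} (hm : 0 < m) (hmn : m < n) {p : ℝ} (hp0 : 0 ≤ p)
    (hp2 : p ≤ 2) :
    (logCutoff k m - logCutoff k n) ^ 2 ≤ (((n : ℝ) - m) / √(m * n) / log k) ^ p := by
  have hm' : (0 : ℝ) < m := by exact_mod_cast hm
  have hmn' : (m : ℝ) ≤ n := by exact_mod_cast hmn.le
  have hlogk := log_natCast_nonneg k
  have hone : |logCutoff k m - logCutoff k n| ≤ 1 := by
    rw [abs_le]
    constructor <;> linarith [logCutoff_nonneg k m, logCutoff_nonneg k n, logCutoff_le_one k m,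
      logCutoff_le_one k n]
  calc (logCutoff k m - logCutoff k n) ^ 2 = |logCutoff k m - logCutoff k n| ^ (2 : ℝ) := by
        rw [rpow_two, sq_abs]
    _ ≤ |logCutoff k m - logCutoff k n| ^ p :=
        rpow_le_rpow_of_exponent_ge' (abs_nonneg _) hone hp0 hp2
    _ ≤ (|log n - log m| / log k) ^ p := by
        gcongr
        exact abs_logCutoff_sub_le k m n
    _ ≤ _ := by
        rw [abs_of_nonneg (sub_nonneg.2 (log_le_log hm' hmn'))]
        gcongr
        · exact div_nonneg (sub_nonneg.2 (log_le_log hm' hmn')) hlogk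
        · exact log_sub_log_le_div_sqrt hm' hmn'

lemma exists_abs_Kker_mul_Riesz_mul_Riesz_le {σ α : ℝ} (hσ0 : 0 ≤ σ) (hσ1 : σ < 1) (hα0 : 0 < α)
    (hα : α ≤ (3 + 2 * σ) / 4) :
    ∃ C, 0 ≤ C ∧ ∀ m n : ℕ, 0 < m → m < n → |Kker σ m n * Riesz α m * Riesz α n| ≤
      C * ((n : ℝ) - m) ^ (-(1 + 2 * σ)) * ((m : ℝ) * n) ^ (σ - 1 / 2) := by
  obtain ⟨A, hA0, hA⟩ := exists_abs_Kker_le_rpow hσ0 hσ1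
  obtain ⟨B, hB0, hB⟩ := exists_Riesz_le_rpow hα0 (by linarith)
  have hI_nonneg := Riesz_nonneg hα0 (by linarith)
  have hI : ∀ n : ℕ, 0 < n → Riesz α n ≤ B * (n : ℝ) ^ (σ - 1 / 2) := fun n hn =>
    (hB n hn).trans (mul_le_mul_of_nonneg_left
      (rpow_le_rpow_of_exponent_le (by exact_mod_cast hn) (by linarith)) hB0)
  refine ⟨A * B ^ 2, by positivity, fun m n hm hmn => ?_⟩
  have hd : (0 : ℝ) < n - m := sub_pos.2 (by exact_mod_cast hmn)
  rw [abs_mul, abs_mul, abs_of_nonneg (hI_nonneg m), abs_of_nonneg (hI_nonneg n)]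
  calc |Kker σ m n| * Riesz α m * Riesz α n
      ≤ A * ((n : ℝ) - m) ^ (-(1 + 2 * σ)) * (B * (m : ℝ) ^ (σ - 1 / 2)) *
          (B * (n : ℝ) ^ (σ - 1 / 2)) := by
        gcongr
        · exact hI_nonneg n
        · exact hI_nonneg m
        · exact hA m n hmn
        · exact hI m hm
        · exact hI n (hm.trans hmn)
    _ = _ := by
        rw [mul_rpow m.cast_nonneg n.cast_nonneg]
        ring

lemma rpow_mul_rpow_mul_div_sqrt_rpow {d x L : ℝ} (hd : 0 < d) (hx : 0 < x) (hL : 0 < L)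
    (σ : ℝ) : d ^ (-(1 + 2 * σ)) * x ^ (σ - 1 / 2) * (d / √x / L) ^ (1 + σ) =
      L ^ (-(1 + σ)) * d ^ (-σ) * x ^ (σ / 2 - 1) := by
  have hd_exp : d ^ (-σ) = d ^ (-(1 + 2 * σ)) * d ^ (1 + σ) := by
    rw [← rpow_add hd]
    ring_nf
  have hx_exp : x ^ (σ / 2 - 1) = x ^ (σ - 1 / 2) * (x ^ (1 / 2 * (1 + σ)))⁻¹ := by
    rw [← rpow_neg hx.le, ← rpow_add hx]
    ring_nf
  rw [hd_exp, hx_exp, rpow_neg hL.le, div_rpow (by positivity) hL.le,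
    div_rpow hd.le (sqrt_nonneg x), sqrt_eq_rpow, ← rpow_mul hx.le]
  ring

/-- The terms of the ground state representation of the form at the cutoff Riesz potential. -/
noncomputable def energyTerm (σ α : ℝ) (k m n : ℕ) : ℝ :=
  Kker σ m n * Riesz α m * Riesz α n * (logCutoff k m - logCutoff k n) ^ 2

lemma energyTerm_comm {σ : ℝ} (hσ : -(1 / 2) < σ) (α : ℝ) (k m n : ℕ) :
    energyTerm σ α k m n = energyTerm σ α k n m := by
  rw [energyTerm, energyTerm, Kker_comm hσ]
  ring

lemma energyTerm_self (σ α : ℝ) (k n : ℕ) : energyTerm σ α k n n = 0 := by simp [energyTerm]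

lemma energyTerm_eq_zero {k m n : ℕ} (hk : 2 ≤ k) (hm : m ∉ Finset.Icc 1 (k ^ 2)) (hmn : m < n)
    (σ α : ℝ) : energyTerm σ α k m n = 0 := by
  rcases m.eq_zero_or_pos with rfl | hm0
  · simp [energyTerm, Riesz]
  · have hkm : k ^ 2 ≤ m := by
      rw [Finset.mem_Icc] at hm
      omega
    rw [energyTerm, logCutoff_eq_zero hk hkm, logCutoff_eq_zero hk (hkm.trans hmn.le)]
    ring

lemma exists_abs_energyTerm_le {σ α : ℝ} (hσ0 : 0 ≤ σ) (hσ1 : σ < 1) (hα0 : 0 < α)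
    (hα : α ≤ (3 + 2 * σ) / 4) :
    ∃ C, 0 ≤ C ∧ ∀ k m j : ℕ, 2 ≤ k → 0 < m →
      |energyTerm σ α k m (m + 1 + j)| ≤ C * log k ^ (-(1 + σ)) * (m : ℝ) ^ (σ / 2 - 1) *
        (((j : ℝ) + 1) ^ (-σ) * ((m : ℝ) + 1 + j) ^ (-(1 - σ / 2))) := by
  obtain ⟨C, hC0, hC⟩ := exists_abs_Kker_mul_Riesz_mul_Riesz_le hσ0 hσ1 hα0 hα
  refine ⟨C, hC0, fun k m j hk hm => ?_⟩
  have hm' : (0 : ℝ) < m := by exact_mod_cast hm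
  have hlog : 0 < log k := log_pos (by exact_mod_cast hk)
  have hdiff : ((m + 1 + j : ℕ) : ℝ) - m = j + 1 := by push_cast; ring
  have hK := hC m (m + 1 + j) hm (by omega)
  have hφ := sq_logCutoff_sub_le (k := k) hm (by omega : m < m + 1 + j)
    (by linarith : 0 ≤ 1 + σ) (by linarith)
  rw [hdiff] at hK hφ
  rw [energyTerm, abs_mul, abs_of_nonneg (sq_nonneg (logCutoff k m - _))]
  refine (mul_le_mul hK hφ (sq_nonneg _) (by positivity)).trans_eq ?_
  rw [mul_assoc C, mul_assoc C,
    rpow_mul_rpow_mul_div_sqrt_rpow (by positivity) (by positivity) hlog,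
    mul_rpow hm'.le (by positivity), neg_sub]
  push_cast
  ring

lemma exists_sum_abs_energyTerm_le {σ α : ℝ} (hσ0 : 0 < σ) (hσ1 : σ < 1) (hα0 : 0 < α)
    (hα : α ≤ (3 + 2 * σ) / 4) :
    ∃ C, 0 ≤ C ∧ ∀ k m N : ℕ, 2 ≤ k → 0 < m →
      ∑ j ∈ Finset.range N, |energyTerm σ α k m (m + 1 + j)| ≤
        C * log k ^ (-(1 + σ)) * (m : ℝ)⁻¹ := by
  obtain ⟨C, hC0, hC⟩ := exists_abs_energyTerm_le hσ0.le hσ1 hα0 hα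
  set D := 1 / (1 - σ) + 1 / (σ + (1 - σ / 2) - 1)
  have hD0 : 0 ≤ D :=
    add_nonneg (one_div_nonneg.2 (by linarith)) (one_div_nonneg.2 (by linarith))
  refine ⟨C * D, mul_nonneg hC0 hD0, fun k m N hk hm => ?_⟩
  have hm' : (0 : ℝ) < m := by exact_mod_cast hm
  have hlog : 0 < log k := log_pos (by exact_mod_cast hk)
  calc _ ≤ ∑ j ∈ Finset.range N, C * log k ^ (-(1 + σ)) * (m : ℝ) ^ (σ / 2 - 1) *
        (((j : ℝ) + 1) ^ (-σ) * ((m : ℝ) + 1 + j) ^ (-(1 - σ / 2))) :=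
        Finset.sum_le_sum fun j _ => hC k m j hk hm
    _ ≤ C * log k ^ (-(1 + σ)) * (m : ℝ) ^ (σ / 2 - 1) *
        (D * (m : ℝ) ^ (1 - σ - (1 - σ / 2))) := by
        rw [← Finset.mul_sum]
        gcongr
        exact sum_range_rpow_neg_mul_rpow_neg_le hσ0.le hσ1 (by linarith) (by linarith) hm N
    _ = _ := by
        rw [show (m : ℝ)⁻¹ = (m : ℝ) ^ (σ / 2 - 1 + (1 - σ - (1 - σ / 2))) by
          rw [← rpow_neg_one]; ring_nf, rpow_add hm']
        ring

lemma sum_Icc_inv_le_one_add_log (n : ℕ) : ∑ m ∈ Finset.Icc 1 n, (m : ℝ)⁻¹ ≤ 1 + log n := by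
  have h := harmonic_le_one_add_log n
  rw [harmonic_eq_sum_Icc] at h
  push_cast at h
  exact h

lemma exists_abs_Qform_sub_tsum_Wweight_le {σ α : ℝ} (hσ0 : 0 < σ) (hσ1 : σ < 1) (hσα : σ < α)
    (hα : α ≤ (3 + 2 * σ) / 4) :
    ∃ C, ∀ k : ℕ, 2 ≤ k → |Qform σ (fun n => logCutoff k n * Riesz α n) -
        ∑' n, Wweight σ α n * (logCutoff k n * Riesz α n) ^ 2| ≤
      C * (log k ^ (-(1 + σ)) * (1 + 2 * log k)) := by
  obtain ⟨C, hC0, hC⟩ := exists_sum_abs_energyTerm_le hσ0 hσ1 (hσ0.trans hσα) hα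
  refine ⟨C, fun k hk => ?_⟩
  have hσ : -(1 / 2) < σ := by linarith
  have henergy : HasSum (fun p : ℕ × ℕ => energyTerm σ α k p.1 p.2) _ :=
    hasSum_groundStateRepresentation (Kker_comm hσ) (s := Finset.range (k ^ 2))
      (fun n hn => logCutoff_eq_zero hk (by simpa using hn))
      (hasSum_Kker_mul_Riesz hσ0 hσ1 hσα (by linarith))
  have hbound := abs_le_two_mul_sum_of_hasSum_symm (energyTerm_comm hσ α k)
    (energyTerm_self σ α k) (fun m hm n hmn => energyTerm_eq_zero hk hm hmn σ α)
    (fun m hm N => hC k m N hk (Finset.mem_Icc.1 hm).1) henergy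
  have hweight : ∑' n, Wweight σ α n * (logCutoff k n * Riesz α n) ^ 2 =
      ∑' n, Riesz (α - σ) n * Riesz α n * logCutoff k n ^ 2 := by
    refine tsum_congr fun n => ?_
    rw [← Wweight_mul_Riesz hσ0 hσα (by linarith)]
    ring
  have hharmonic := sum_Icc_inv_le_one_add_log (k ^ 2)
  rw [← Finset.mul_sum, abs_mul, abs_two, abs_sub_comm] at hbound
  rw [hweight, Qform]
  refine (le_of_mul_le_mul_left hbound two_pos).trans ?_
  push_cast [log_pow] at hharmonic
  rw [← mul_assoc]
  exact mul_le_mul_of_nonneg_left hharmonic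
    (mul_nonneg hC0 (rpow_nonneg (log_natCast_nonneg k) _))

lemma tendsto_log_rpow_neg_mul_one_add_two_mul_log {σ : ℝ} (hσ : 0 < σ) :
    Tendsto (fun k : ℕ => log k ^ (-(1 + σ)) * (1 + 2 * log k)) atTop (nhds 0) := by
  have hlog : Tendsto (fun k : ℕ => log k) atTop atTop :=
    tendsto_log_atTop.comp tendsto_natCast_atTop_atTop
  have hfirst : Tendsto (fun k : ℕ => log k ^ (-(1 + σ))) atTop (nhds 0) :=
    (tendsto_rpow_neg_atTop (by linarith)).comp hlog
  have hsecond : Tendsto (fun k : ℕ => log k ^ (-σ)) atTop (nhds 0) :=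
    (tendsto_rpow_neg_atTop hσ).comp hlog
  have hsum := hfirst.add (hsecond.const_mul 2)
  rw [mul_zero, add_zero] at hsum
  refine hsum.congr' ?_
  filter_upwards [hlog.eventually_gt_atTop 0] with k hk
  rw [show -σ = -(1 + σ) + 1 by ring, rpow_add hk, rpow_one]
  ring

/-- The log-cutoff functions multiplied by `I_α` form a null-sequence for
`(-Δ_ℕ)^σ - W_{α,σ}` when `σ ∈ (0,1)` and `σ < α ≤ (3+2σ)/4`. -/
theorem stmt_8 (σ α : ℝ) (hσ0 : 0 < σ) (hσ1 : σ < 1)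
    (hα1 : σ < α) (hα2 : α ≤ (3 + 2 * σ) / 4)
    (ψ : ℕ → ℕ → ℝ)
    (hψ : ψ = fun (k n : ℕ) =>
      (if n ≤ k then (1 : ℝ)
       else if n ≤ k ^ 2 then 2 - Real.log (n : ℝ) / Real.log (k : ℝ)
       else 0) * Riesz α n) :
    (∀ k : ℕ, 2 ≤ k →
        (∀ n, 0 ≤ ψ k n) ∧ (Function.support (ψ k)).Finite ∧ ψ k 1 = Riesz α 1) ∧
    Filter.Tendsto
      (fun k : ℕ => Qform σ (ψ k) - ∑' n : ℕ, Wweight σ α n * (ψ k n) ^ 2)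
      Filter.atTop (nhds 0) := by
  have hα0 : 0 < α := hσ0.trans hα1
  have hψ_eq : ∀ k : ℕ, 2 ≤ k → ψ k = fun n => logCutoff k n * Riesz α n := fun k hk => by
    simp only [hψ, logCutoff_eq_ite hk]
  constructor
  · intro k hk
    rw [hψ_eq k hk]
    refine ⟨fun n => mul_nonneg (logCutoff_nonneg k n) (Riesz_nonneg hα0 (by linarith) n), ?_, ?_⟩
    · refine (Set.finite_Iio (k ^ 2)).subset fun n hn => ?_
      by_contra hkn
      exact left_ne_zero_of_mul hn (logCutoff_eq_zero hk (not_lt.1 hkn))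
    · simp only [logCutoff_eq_one (show 1 ≤ k by omega), one_mul]
  · obtain ⟨C, hC⟩ := exists_abs_Qform_sub_tsum_Wweight_le hσ0 hσ1 hα1 hα2
    have hlim := (tendsto_log_rpow_neg_mul_one_add_two_mul_log hσ0).const_mul C
    rw [mul_zero] at hlim
    refine squeeze_zero_norm' ?_ hlim
    filter_upwards [eventually_ge_atTop 2] with k hk
    rw [hψ_eq k hk]
    exact hC k hk
end

section
/- Let α ∈ (1, 5/4]. Then −Δ_ℕ − W_{α,1} is critical on ℕ: the inequality Q(f) := Σ_{n≥0}(f(n+1)−f(n))² ≥ Σ_{n≥1} W_{α,1}(n)·f(n)² holds for every finitely supported f : ℕ → ℝ (with the convention f(0) = 0), while for every nonzero W̃ : ℕ → [0,∞) there exists a finitely supported f (f(0)=0) with Q(f) < Σ_{n≥1}(W_{α,1}(n)+W̃(n))·f(n)². -/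
open Real Filter

/-- The quadratic form of the Dirichlet Laplacian `-Δ_ℕ` on the discrete half-line
(with the convention `f 0 = 0`). -/
noncomputable def QDir (f : ℕ → ℝ) : ℝ := ∑' n : ℕ, (f (n + 1) - f n) ^ 2

/-!
The Riesz potential `I_α(n) = C · n Γ(n+α-1) / Γ(n-α+2)` is a positive solution of
`(-Δ_ℕ - W_{α,1}) u = 0` with `u(0) = 0`. Writing `f = u g` yields the ground state representation
`Q(f) - ∑ W_{α,1} f² = ∑ u(n) u(n+1) (g(n+1) - g(n))²`, whose right-hand side is nonnegative: this
is the Hardy inequality. That right-hand side is the energy of `g` on a chain of resistors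
`1 / (u(n) u(n+1))`. For `α ≤ 5/4` one has `u(n) u(n+1) = O(n)`, so the resistance to infinity is
infinite, and finitely supported `g` with `g(m) = 1` and arbitrarily small energy exist. Hence no
weight can be added at any site `m`.
-/

section FiniteSupport

variable {M : Type*} [Zero M] {f : ℕ → M}

lemma exists_forall_ge_eq_zero (hf : f.support.Finite) : ∃ N, ∀ n, N ≤ n → f n = 0 :=
  eventually_atTop.1 <| Nat.cofinite_eq_atTop ▸ eventually_cofinite.2 hf

lemma finite_support_of_forall_ge_eq_zero {N : ℕ} (hf : ∀ n, N ≤ n → f n = 0) :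
    f.support.Finite :=
  (Set.finite_Iio N).subset fun n hn ↦ not_le.1 fun h ↦ hn (hf n h)

end FiniteSupport

section Resistance

/-- The energy of `g` on the path graph on `{0, 1, 2, …}` whose edge from `n` to `n + 1` has
conductance `c n`. -/
noncomputable def pathEnergy (c g : ℕ → ℝ) : ℝ := ∑' n, c n * (g (n + 1) - g n) ^ 2

/-- The resistance between the vertices `m` and `N` of the path graph with conductances `c`
(zero if `N ≤ m`). -/
noncomputable def pathResistance (c : ℕ → ℝ) (m N : ℕ) : ℝ := ∑ n ∈ Finset.Ico m N, (c n)⁻¹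

/-- The function on the path graph with conductances `c` of least energy among those equal to `1`
up to `m` and to `0` from `N` on. It is meaningful for `m < N`. -/
noncomputable def equilibriumPotential (c : ℕ → ℝ) (m N n : ℕ) : ℝ :=
  pathResistance c (max m n) N / pathResistance c m N

variable {c : ℕ → ℝ} {m N n : ℕ}

lemma pathEnergy_nonneg (hc : ∀ n, 0 ≤ c n) (g : ℕ → ℝ) : 0 ≤ pathEnergy c g :=
  tsum_nonneg fun n ↦ mul_nonneg (hc n) (sq_nonneg _)

lemma pathResistance_eq_inv_add (h : m < N) :
    pathResistance c m N = (c m)⁻¹ + pathResistance c (m + 1) N :=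
  Finset.sum_eq_sum_Ico_succ_bot h _

lemma tendsto_pathResistance_atTop (hc : ∀ n, m ≤ n → 0 ≤ c n)
    (hdiv : ¬ Summable fun n ↦ (c n)⁻¹) : Tendsto (pathResistance c m) atTop atTop := by
  have hshift : ¬ Summable fun n ↦ (c (n + m))⁻¹ := fun h ↦ hdiv ((summable_nat_add_iff m).1 h)
  have htail := (not_summable_iff_tendsto_nat_atTop_of_nonneg
    fun n ↦ inv_nonneg.2 (hc (n + m) (Nat.le_add_left m n))).1 hshift
  refine (htail.comp (tendsto_sub_atTop_nat m)).congr fun N ↦ ?_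
  simp only [pathResistance, Finset.sum_Ico_eq_sum_range, Function.comp_apply, add_comm]

lemma equilibriumPotential_self (h : pathResistance c m N ≠ 0) :
    equilibriumPotential c m N m = 1 := by
  rw [equilibriumPotential, max_self, div_self h]

lemma equilibriumPotential_of_le (h : N ≤ n) : equilibriumPotential c m N n = 0 := by
  rw [equilibriumPotential, pathResistance, Finset.Ico_eq_empty_of_le (h.trans (le_max_right m n)),
    Finset.sum_empty, zero_div]

lemma equilibriumPotential_succ_of_notMem (h : n ∉ Finset.Ico m N) :
    equilibriumPotential c m N (n + 1) = equilibriumPotential c m N n := by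
  rcases lt_or_ge n m with hnm | hmn
  · rw [equilibriumPotential, equilibriumPotential, max_eq_left hnm, max_eq_left hnm.le]
  · have hNn : N ≤ n := not_lt.1 fun hnN ↦ h (Finset.mem_Ico.2 ⟨hmn, hnN⟩)
    rw [equilibriumPotential_of_le hNn, equilibriumPotential_of_le (Nat.le_succ_of_le hNn)]

lemma equilibriumPotential_succ_sub (h : n ∈ Finset.Ico m N) :
    equilibriumPotential c m N (n + 1) - equilibriumPotential c m N n =
      -((c n)⁻¹ / pathResistance c m N) := by
  obtain ⟨hmn, hnN⟩ := Finset.mem_Ico.1 h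
  rw [equilibriumPotential, equilibriumPotential, max_eq_right hmn,
    max_eq_right (Nat.le_succ_of_le hmn), pathResistance_eq_inv_add hnN]
  ring

lemma pathEnergy_equilibriumPotential (hc : ∀ n, m ≤ n → c n ≠ 0) (N : ℕ) :
    pathEnergy c (equilibriumPotential c m N) = (pathResistance c m N)⁻¹ := by
  have hterm : ∀ n ∈ Finset.Ico m N,
      c n * (equilibriumPotential c m N (n + 1) - equilibriumPotential c m N n) ^ 2 =
        (c n)⁻¹ / pathResistance c m N ^ 2 := fun n hn ↦ by
    have := hc n (Finset.mem_Ico.1 hn).1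
    rw [equilibriumPotential_succ_sub hn]
    field_simp
  have hzero : ∀ n ∉ Finset.Ico m N,
      c n * (equilibriumPotential c m N (n + 1) - equilibriumPotential c m N n) ^ 2 = 0 :=
    fun n hn ↦ by simp [equilibriumPotential_succ_of_notMem hn]
  rw [pathEnergy, tsum_eq_sum hzero, Finset.sum_congr rfl hterm, ← Finset.sum_div,
    ← pathResistance, sq, div_self_mul_self']

theorem exists_pathEnergy_lt (hc : ∀ n, m ≤ n → 0 < c n) (hdiv : ¬ Summable fun n ↦ (c n)⁻¹)
    {ε : ℝ} (hε : 0 < ε) : ∃ g : ℕ → ℝ, g m = 1 ∧ g.support.Finite ∧ pathEnergy c g < ε := by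
  have hlim := tendsto_pathResistance_atTop (fun n hn ↦ (hc n hn).le) hdiv
  obtain ⟨N, hN⟩ := (hlim.eventually_gt_atTop ε⁻¹).exists
  have hpos : 0 < pathResistance c m N := (inv_pos.2 hε).trans hN
  refine ⟨equilibriumPotential c m N, equilibriumPotential_self hpos.ne',
    finite_support_of_forall_ge_eq_zero fun n ↦ equilibriumPotential_of_le, ?_⟩
  rw [pathEnergy_equilibriumPotential (fun n hn ↦ (hc n hn).ne')]
  exact inv_lt_of_inv_lt₀ hε hN

end Resistance

section GroundState

/-- `u` solves `(-Δ_ℕ - V) u = 0` on `{1, 2, …}` with the Dirichlet condition `u 0 = 0`;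
the value `V 0` is unconstrained. -/
structure IsDirichletSolution (V u : ℕ → ℝ) : Prop where
  map_zero : u 0 = 0
  mul_succ : ∀ n, V (n + 1) * u (n + 1) = 2 * u (n + 1) - u n - u (n + 2)

namespace IsDirichletSolution

variable {V u : ℕ → ℝ}

lemma sum_range_sq_sub (hu : IsDirichletSolution V u) (g : ℕ → ℝ) (N : ℕ) :
    ∑ n ∈ Finset.range (N + 1), (u (n + 1) * g (n + 1) - u n * g n) ^ 2 =
      ∑ n ∈ Finset.range (N + 1), u n * u (n + 1) * (g (n + 1) - g n) ^ 2 +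
      ∑ n ∈ Finset.range (N + 1), V n * (u n * g n) ^ 2 +
      u (N + 1) * (u (N + 1) - u N) * g (N + 1) ^ 2 := by
  induction N with
  | zero => simp [hu.map_zero, ← sq, mul_pow]
  | succ N ih =>
    rw [Finset.sum_range_succ, ih, Finset.sum_range_succ _ (N + 1),
      Finset.sum_range_succ _ (N + 1)]
    linear_combination (-u (N + 1) * g (N + 1) ^ 2) * hu.mul_succ N

theorem qDir_mul (hu : IsDirichletSolution V u) {g : ℕ → ℝ} (hg : g.support.Finite) :
    QDir (fun n ↦ u n * g n) =
      pathEnergy (fun n ↦ u n * u (n + 1)) g + ∑' n, V n * (u n * g n) ^ 2 := by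
  obtain ⟨N, hN⟩ := exists_forall_ge_eq_zero hg
  have hzero : ∀ n ∉ Finset.range (N + 1), g n = 0 ∧ g (n + 1) = 0 := fun n hn ↦ by
    rw [Finset.mem_range] at hn
    exact ⟨hN n (by omega), hN (n + 1) (by omega)⟩
  rw [QDir, pathEnergy, tsum_eq_sum (s := Finset.range (N + 1)) fun n hn ↦ by simp [hzero n hn],
    tsum_eq_sum (s := Finset.range (N + 1)) fun n hn ↦ by simp [hzero n hn],
    tsum_eq_sum (s := Finset.range (N + 1)) fun n hn ↦ by simp [hzero n hn],
    hu.sum_range_sq_sub, hN (N + 1) N.le_succ]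
  ring

lemma nonneg (hu : IsDirichletSolution V u) (hpos : ∀ n, 0 < u (n + 1)) : ∀ n, 0 ≤ u n
  | 0 => hu.map_zero.ge
  | n + 1 => (hpos n).le

theorem tsum_mul_sq_le_qDir (hu : IsDirichletSolution V u) (hpos : ∀ n, 0 < u (n + 1))
    {f : ℕ → ℝ} (hf₀ : f 0 = 0) (hf : f.support.Finite) : ∑' n, V n * f n ^ 2 ≤ QDir f := by
  have hquot : (fun n ↦ u n * (f n / u n)) = f := by
    ext (_ | n)
    · rw [hu.map_zero, hf₀, zero_mul]
    · exact mul_div_cancel₀ _ (hpos n).ne'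
  have hsupp : (fun n ↦ f n / u n).support.Finite :=
    hf.subset fun n hn h ↦ hn (by simp [h])
  have hrep := hu.qDir_mul hsupp
  rw [hquot] at hrep
  simp only [congrFun hquot] at hrep
  have henergy := pathEnergy_nonneg
    (fun n ↦ mul_nonneg (hu.nonneg hpos n) (hu.nonneg hpos (n + 1))) fun n ↦ f n / u n
  linarith

theorem exists_qDir_lt_tsum (hu : IsDirichletSolution V u) (hpos : ∀ n, 0 < u (n + 1))
    (hdiv : ¬ Summable fun n ↦ (u n * u (n + 1))⁻¹) {W : ℕ → ℝ} (hW : ∀ n, 0 ≤ W n) {m : ℕ}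
    (hm : 1 ≤ m) (hWm : W m ≠ 0) :
    ∃ f : ℕ → ℝ, f 0 = 0 ∧ f.support.Finite ∧ QDir f < ∑' n, (V n + W n) * f n ^ 2 := by
  have hu_pos : ∀ n, m ≤ n → 0 < u n := fun n hn ↦ by
    simpa only [Nat.sub_add_cancel (hm.trans hn)] using hpos (n - 1)
  have hgain : 0 < W m * u m ^ 2 :=
    mul_pos ((hW m).lt_of_ne' hWm) (pow_pos (hu_pos m le_rfl) 2)
  obtain ⟨g, hgm, hg, henergy⟩ := exists_pathEnergy_lt
    (fun n hn ↦ mul_pos (hu_pos n hn) (hu_pos (n + 1) (Nat.le_succ_of_le hn))) hdiv hgain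
  have hf : (fun n ↦ u n * g n).support.Finite := hg.subset fun n hn h ↦ hn (by simp [h])
  have hsumm (X : ℕ → ℝ) : Summable fun n ↦ X n * (u n * g n) ^ 2 :=
    summable_of_hasFiniteSupport <| hf.subset fun n hn h ↦ hn (by simp [h])
  refine ⟨fun n ↦ u n * g n, by simp [hu.map_zero], hf, ?_⟩
  calc QDir (fun n ↦ u n * g n)
      = pathEnergy (fun n ↦ u n * u (n + 1)) g + ∑' n, V n * (u n * g n) ^ 2 := hu.qDir_mul hg
    _ < W m * (u m * g m) ^ 2 + ∑' n, V n * (u n * g n) ^ 2 := by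
      rw [hgm, mul_one]
      gcongr
    _ ≤ ∑' n, W n * (u n * g n) ^ 2 + ∑' n, V n * (u n * g n) ^ 2 := by
      gcongr
      exact (hsumm W).le_tsum m fun n _ ↦ mul_nonneg (hW n) (sq_nonneg _)
    _ = ∑' n, (V n + W n) * (u n * g n) ^ 2 := by
      simp only [add_mul]
      rw [(hsumm V).tsum_add (hsumm W), add_comm]

end IsDirichletSolution

end GroundState

section Riesz

variable {α : ℝ}

lemma riesz_zero (α : ℝ) : Riesz α 0 = 0 := by
  simp [Riesz]

lemma riesz_succ_pos (hα₀ : 0 < α) (hα : α < 3 / 2) (n : ℕ) : 0 < Riesz α (n + 1) := by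
  have : (0 : ℝ) ≤ n := n.cast_nonneg
  have := Gamma_pos_of_pos (show 0 < 3 / 2 - α by linarith)
  have := Gamma_pos_of_pos (show 0 < ((n + 1 : ℕ) : ℝ) + α - 1 by push_cast; linarith)
  have := Gamma_pos_of_pos (show 0 < ((n + 1 : ℕ) : ℝ) - α + 2 by push_cast; linarith)
  have := Gamma_pos_of_pos hα₀
  unfold Riesz
  positivity

lemma riesz_succ (hα₀ : 0 < α) (hα : α < 3) (n : ℕ) :
    n * (n + 2 - α) * Riesz α (n + 1) = (n + 1) * (n + α - 1) * Riesz α n := by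
  obtain rfl | hn := Nat.eq_zero_or_pos n
  · simp [riesz_zero]
  have hn : (1 : ℝ) ≤ n := by exact_mod_cast hn
  have hnum : n + α - 1 ≠ 0 := by linarith
  have hden : n - α + 2 ≠ 0 := by linarith
  have hΓnum : Gamma ((n + 1 : ℕ) + α - 1) = (n + α - 1) * Gamma (n + α - 1) := by
    rw [← Gamma_add_one hnum]; push_cast; ring_nf
  have hΓden : Gamma ((n + 1 : ℕ) - α + 2) = (n - α + 2) * Gamma (n - α + 2) := by
    rw [← Gamma_add_one hden]; push_cast; ring_nf
  rw [Riesz, Riesz, hΓnum, hΓden]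
  push_cast
  field_simp
  ring

lemma natCast_add_sub_one_ne_zero (hα₀ : 0 < α) (hα₁ : α ≠ 1) (n : ℕ) : (n : ℝ) + α - 1 ≠ 0 := by
  rcases n with _ | n
  · simpa [sub_eq_zero] using hα₁
  · push_cast
    have : (0 : ℝ) ≤ n := n.cast_nonneg
    linarith

lemma wweight_one_succ (hα₀ : 0 < α) (hα₁ : α ≠ 1) (hα : α < 3 / 2) (n : ℕ) :
    Wweight 1 α (n + 1) = 2 * (α - 1) * (3 - 2 * α) / ((n + 3 - α) * (n + α - 1)) := by
  have : (0 : ℝ) ≤ n := n.cast_nonneg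
  have hα₁' : α - 1 ≠ 0 := sub_ne_zero.2 hα₁
  have hnα := natCast_add_sub_one_ne_zero hα₀ hα₁ n
  have hnα' : (n : ℝ) + 3 - α ≠ 0 := by linarith
  have hΓ_const : Gamma (3 / 2 - α + 1) = (3 / 2 - α) * Gamma (3 / 2 - α) :=
    Gamma_add_one (by linarith)
  have hΓα : Gamma α = (α - 1) * Gamma (α - 1) := by
    rw [← Gamma_add_one hα₁', sub_add_cancel]
  have hΓ_up : Gamma ((n + 1 : ℕ) + α - 1) = (n + α - 1) * Gamma (n + α - 1) := by
    rw [← Gamma_add_one hnα]; push_cast; ring_nf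
  have hΓ_down : Gamma ((n + 1 : ℕ) - α + 1 + 2) = (n + 3 - α) * Gamma (n + 3 - α) := by
    rw [← Gamma_add_one hnα']; push_cast; ring_nf
  have hΓ_const_ne : Gamma (3 / 2 - α) ≠ 0 := (Gamma_pos_of_pos (by linarith)).ne'
  have hΓα_ne : Gamma (α - 1) ≠ 0 := right_ne_zero_of_mul (hΓα ▸ (Gamma_pos_of_pos hα₀).ne')
  have hΓ_up_ne : Gamma (n + α - 1) ≠ 0 :=
    right_ne_zero_of_mul (hΓ_up ▸ (Gamma_pos_of_pos (by push_cast; linarith)).ne')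
  have hΓ_down_ne : Gamma (n + 3 - α) ≠ 0 := (Gamma_pos_of_pos (by linarith)).ne'
  have harg_up : ((n + 1 : ℕ) : ℝ) + α - 1 - 1 = n + α - 1 := by push_cast; ring
  have harg_down : ((n + 1 : ℕ) : ℝ) - α + 2 = n + 3 - α := by push_cast; ring
  rw [Wweight, hΓ_const, hΓ_up, hΓ_down, harg_up, harg_down, hΓα, rpow_one]
  -- Otherwise `field_simp` rewrites the argument `3 / 2 - α`, and the factor no longer cancels.
  generalize Gamma (3 / 2 - α) = G at hΓ_const_ne ⊢
  field_simp
  ring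

theorem isDirichletSolution_riesz (hα₀ : 0 < α) (hα₁ : α ≠ 1) (hα : α < 3 / 2) :
    IsDirichletSolution (Wweight 1 α) (Riesz α) where
  map_zero := riesz_zero α
  mul_succ n := by
    have : (0 : ℝ) ≤ n := n.cast_nonneg
    have hnα := natCast_add_sub_one_ne_zero hα₀ hα₁ n
    have hnα' : (n : ℝ) + 3 - α ≠ 0 := by linarith
    have hprev : Riesz α n = n * (n + 2 - α) / ((n + 1) * (n + α - 1)) * Riesz α (n + 1) := by
      have := riesz_succ hα₀ (by linarith) n
      field_simp
      linear_combination -this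
    have hnext : Riesz α (n + 2) =
        (n + 2) * (n + α) / ((n + 1) * (n + 3 - α)) * Riesz α (n + 1) := by
      have := riesz_succ hα₀ (by linarith) (n + 1)
      push_cast at this
      field_simp
      linear_combination this
    rw [wweight_one_succ hα₀ hα₁ hα, hprev, hnext]
    field_simp
    ring

lemma succ_mul_riesz_add_three_le (hα₀ : 0 < α) (hα : α ≤ 5 / 4) (n : ℕ) :
    (n + 1) * Riesz α (n + 3) ≤ (n + 2) * Riesz α (n + 1) := by
  have : (0 : ℝ) ≤ n := n.cast_nonneg
  have hden : 0 < (n + 3 - α) * (n + 4 - α) := mul_pos (by linarith) (by linarith)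
  have hstep₁ := riesz_succ hα₀ (by linarith) (n + 1)
  have hstep₂ := riesz_succ hα₀ (by linarith) (n + 2)
  push_cast at hstep₁ hstep₂
  have htwo_steps : (n + 3 - α) * (n + 4 - α) * ((n + 1) * Riesz α (n + 3)) =
      (n + 3) * (n + 1 + α) * (n + α) * Riesz α (n + 1) := by
    have hn₂ : (n : ℝ) + 2 ≠ 0 := by linarith
    refine mul_left_cancel₀ hn₂ ?_
    linear_combination (n + 3 - α) * (n + 1) * hstep₂ + (n + 3) * (n + 1 + α) * hstep₁
  -- The `n ^ 2` coefficients of the two sides differ by `5 - 4 * α`.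
  have hpoly : (n + 3) * (n + 1 + α) * (n + α) ≤ (n + 2) * ((n + 3 - α) * (n + 4 - α)) := by
    have h₀ : 0 ≤ 5 / 4 - α := by linarith
    have h₁ : 0 ≤ (n : ℝ) * (5 / 4 - α) := by positivity
    have h₂ : 0 ≤ (n : ℝ) ^ 2 * (5 / 4 - α) := by positivity
    nlinarith [mul_nonneg hα₀.le h₀]
  refine le_of_mul_le_mul_left ?_ hden
  calc (n + 3 - α) * (n + 4 - α) * ((n + 1) * Riesz α (n + 3))
      = (n + 3) * (n + 1 + α) * (n + α) * Riesz α (n + 1) := htwo_steps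
    _ ≤ (n + 2) * ((n + 3 - α) * (n + 4 - α)) * Riesz α (n + 1) :=
      mul_le_mul_of_nonneg_right hpoly (riesz_succ_pos hα₀ (by linarith) n).le
    _ = (n + 3 - α) * (n + 4 - α) * ((n + 2) * Riesz α (n + 1)) := by ring

lemma riesz_mul_riesz_succ_le (hα₀ : 0 < α) (hα : α ≤ 5 / 4) (n : ℕ) :
    Riesz α (n + 1) * Riesz α (n + 2) ≤ (n + 1) * (Riesz α 1 * Riesz α 2) := by
  induction n with
  | zero => simp
  | succ n ih =>
    have hn : (0 : ℝ) < n + 1 := n.cast_add_one_pos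
    have hpos := riesz_succ_pos hα₀ (by linarith) (n + 1)
    push_cast
    refine le_of_mul_le_mul_left ?_ hn
    calc (n + 1) * (Riesz α (n + 2) * Riesz α (n + 3))
        = (n + 1) * Riesz α (n + 3) * Riesz α (n + 2) := by ring
      _ ≤ (n + 2) * Riesz α (n + 1) * Riesz α (n + 2) :=
        mul_le_mul_of_nonneg_right (succ_mul_riesz_add_three_le hα₀ hα n) hpos.le
      _ = (n + 2) * (Riesz α (n + 1) * Riesz α (n + 2)) := by ring
      _ ≤ (n + 2) * ((n + 1) * (Riesz α 1 * Riesz α 2)) := by gcongr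
      _ = (n + 1) * ((n + 1 + 1) * (Riesz α 1 * Riesz α 2)) := by ring

theorem not_summable_inv_riesz_mul_riesz_succ (hα₀ : 0 < α) (hα : α ≤ 5 / 4) :
    ¬ Summable fun n ↦ (Riesz α n * Riesz α (n + 1))⁻¹ := by
  have hpos := riesz_succ_pos hα₀ (by linarith)
  set C := Riesz α 1 * Riesz α 2
  have : 0 < C := mul_pos (hpos 0) (hpos 1)
  intro hsum
  refine not_summable_natCast_inv <| (summable_nat_add_iff 1).1 <|
    (((summable_nat_add_iff 1).2 hsum).mul_left C).of_nonneg_of_le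
      (fun n ↦ by positivity) fun n ↦ ?_
  have hprod := mul_pos (hpos n) (hpos (n + 1))
  rw [← div_eq_mul_inv, inv_le_iff_one_le_mul₀' (by positivity), mul_div_assoc', one_le_div hprod]
  exact_mod_cast riesz_mul_riesz_succ_le hα₀ hα n

end Riesz

theorem stmt_9_general (α : ℝ) (hα₀ : 0 < α) (hα₁ : α ≠ 1) (hα : α ≤ 5 / 4) :
    (∀ f : ℕ → ℝ, f 0 = 0 → (Function.support f).Finite →
      (∑' n : ℕ, Wweight 1 α n * (f n) ^ 2) ≤ QDir f) ∧
    (∀ Wt : ℕ → ℝ, (∀ n, 0 ≤ Wt n) → (∃ n, 1 ≤ n ∧ Wt n ≠ 0) →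
      ∃ f : ℕ → ℝ, f 0 = 0 ∧ (Function.support f).Finite ∧
        QDir f < ∑' n : ℕ, (Wweight 1 α n + Wt n) * (f n) ^ 2) := by
  have hα' : α < 3 / 2 := by linarith
  have hsol := isDirichletSolution_riesz hα₀ hα₁ hα'
  have hpos := riesz_succ_pos hα₀ hα'
  refine ⟨fun f hf₀ hf ↦ hsol.tsum_mul_sq_le_qDir hpos hf₀ hf, ?_⟩
  rintro Wt hWt ⟨m, hm, hWtm⟩
  exact hsol.exists_qDir_lt_tsum hpos
    (not_summable_inv_riesz_mul_riesz_succ hα₀ hα) hWt hm hWtm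

/-- Criticality of `-Δ_ℕ - W_{α,1}` for `α ∈ (1, 5/4]`. -/
theorem stmt_9 (α : ℝ) (hα1 : 1 < α) (hα2 : α ≤ 5/4) :
    (∀ f : ℕ → ℝ, f 0 = 0 → (Function.support f).Finite →
      (∑' n : ℕ, Wweight 1 α n * (f n) ^ 2) ≤ QDir f) ∧
    (∀ Wt : ℕ → ℝ, (∀ n, 0 ≤ Wt n) → (∃ n, 1 ≤ n ∧ Wt n ≠ 0) →
      ∃ f : ℕ → ℝ, f 0 = 0 ∧ (Function.support f).Finite ∧
        QDir f < ∑' n : ℕ, (Wweight 1 α n + Wt n) * (f n) ^ 2) :=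
  stmt_9_general α (by linarith) hα1.ne' hα2
end
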